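/- arXiv:1605.03756 — 10 statements merged into one kernel-verified Lean document; each statement's English description precedes it below -/
import Mathlib

section
/- Suppose n and n′ are even positive integers with Xₙ = b^m − 1 and X_{n′} = b^{m′} − 1 for some integers m ≥ 2 and m′ ≥ 2. Then n = n′ (and hence m = m′); that is, there is at most one even index n such that Xₙ + 1 is a power b^m of b with m > 1. -/
/-!
Write `n = 2k`. The duplication formula `X₂ₖ = 2Xₖ² - 1` turns `Xₙ = bᵐ - 1` into `bᵐ = 2Xₖ²`.
Hence `b` is even, and as `m ≥ 2` also `Xₖ` is even. By duplication `Xⱼ` is odd for even `j`, so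
`k` is odd; and the recurrence `Xⱼ₊₂ = 2X₁Xⱼ₊₁ - Xⱼ` shows that `Xₖ` is then `X₁` times an odd
number (`odd_index_eq_mul_odd`). Therefore `m · v₂(b) = 1 + 2 v₂(X₁)`, which determines `m`,
hence `Xₙ`, hence `n`, because `X` is strictly increasing.
-/

/-- Comparison of coefficients in `ℤ[√d]`. -/
lemma sqrt_coeff_unique {d : ℕ} (hdns : ¬ IsSquare d) {a b a' b' : ℕ}
    (h : (a : ℝ) + b * Real.sqrt d = a' + b' * Real.sqrt d) : a = a' ∧ b = b' := by
  have hirr : Irrational (Real.sqrt d) := irrational_sqrt_natCast_iff.2 hdns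
  have hb : b = b' := by
    by_contra hne
    have hne' : (b : ℝ) - b' ≠ 0 := sub_ne_zero.2 (by exact_mod_cast hne)
    apply hirr
    refine ⟨((a' : ℚ) - a) / (b - b'), ?_⟩
    push_cast
    rw [div_eq_iff hne']
    linarith
  subst hb
  exact ⟨by exact_mod_cast add_right_cancel h, rfl⟩

section

variable {d : ℕ} {X Y : ℕ → ℕ}

lemma pell_add (hdns : ¬ IsSquare d)
    (hXY : ∀ n : ℕ, 1 ≤ n → (X n : ℝ) + (Y n : ℝ) * Real.sqrt d =
      ((X 1 : ℝ) + (Y 1 : ℝ) * Real.sqrt d) ^ n)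
    {j k : ℕ} (hj : 1 ≤ j) (hk : 1 ≤ k) :
    X (j + k) = X j * X k + d * Y j * Y k ∧ Y (j + k) = X j * Y k + Y j * X k := by
  apply sqrt_coeff_unique hdns
  have hs : Real.sqrt d * Real.sqrt d = d := Real.mul_self_sqrt (Nat.cast_nonneg d)
  rw [hXY (j + k) (by omega), pow_add, ← hXY j hj, ← hXY k hk]
  push_cast
  linear_combination (Y j : ℝ) * Y k * hs

lemma pell_eq
    (hadd : ∀ j k : ℕ, 1 ≤ j → 1 ≤ k →
      X (j + k) = X j * X k + d * Y j * Y k ∧ Y (j + k) = X j * Y k + Y j * X k)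
    (hpell : (X 1 : ℤ) ^ 2 - (d : ℤ) * (Y 1 : ℤ) ^ 2 = 1)
    {k : ℕ} (hk : 1 ≤ k) : (X k : ℤ) ^ 2 - (d : ℤ) * (Y k : ℤ) ^ 2 = 1 := by
  induction k, hk using Nat.le_induction with
  | base => exact hpell
  | succ k hk ih =>
    obtain ⟨h1, h2⟩ := hadd k 1 hk le_rfl
    rw [h1, h2]
    push_cast
    linear_combination hpell * ((X k : ℤ) ^ 2 - (d : ℤ) * (Y k : ℤ) ^ 2) + ih

lemma pell_double
    (hadd : ∀ j k : ℕ, 1 ≤ j → 1 ≤ k →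
      X (j + k) = X j * X k + d * Y j * Y k ∧ Y (j + k) = X j * Y k + Y j * X k)
    (hpell : (X 1 : ℤ) ^ 2 - (d : ℤ) * (Y 1 : ℤ) ^ 2 = 1)
    {k : ℕ} (hk : 1 ≤ k) : X (k + k) + 1 = 2 * X k ^ 2 := by
  have h := pell_eq hadd hpell hk
  have h1 := (hadd k k hk hk).1
  zify at h1 ⊢
  linear_combination h1 - h

lemma pell_rec
    (hadd : ∀ j k : ℕ, 1 ≤ j → 1 ≤ k →
      X (j + k) = X j * X k + d * Y j * Y k ∧ Y (j + k) = X j * Y k + Y j * X k)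
    (hpell : (X 1 : ℤ) ^ 2 - (d : ℤ) * (Y 1 : ℤ) ^ 2 = 1)
    {k : ℕ} (hk : 1 ≤ k) : (X (k + 2) : ℤ) = 2 * X 1 * X (k + 1) - X k := by
  have h1 := (hadd (k + 1) 1 (by omega) le_rfl).1
  obtain ⟨h2, h3⟩ := hadd k 1 hk le_rfl
  rw [show k + 2 = k + 1 + 1 from rfl, h1, h3, h2]
  push_cast
  linear_combination (-X k : ℤ) * hpell

/-- At odd indices, `X₁` divides `X` with odd cofactor, so that `v₂(X)` is constant there. -/
lemma odd_index_eq_mul_odd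
    (hadd : ∀ j k : ℕ, 1 ≤ j → 1 ≤ k →
      X (j + k) = X j * X k + d * Y j * Y k ∧ Y (j + k) = X j * Y k + Y j * X k)
    (hpell : (X 1 : ℤ) ^ 2 - (d : ℤ) * (Y 1 : ℤ) ^ 2 = 1)
    (j : ℕ) : ∃ u : ℤ, Odd u ∧ (X (2 * j + 1) : ℤ) = X 1 * u := by
  induction j with
  | zero => exact ⟨1, odd_one, by simp⟩
  | succ j ih =>
    obtain ⟨u, hu, h⟩ := ih
    refine ⟨2 * X (2 * j + 2) - u, (even_two_mul _).sub_odd hu, ?_⟩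
    rw [show 2 * (j + 1) + 1 = 2 * j + 1 + 2 by ring,
      pell_rec hadd hpell (show 1 ≤ 2 * j + 1 by omega), h]
    ring

lemma pell_X_lt
    (hadd : ∀ j k : ℕ, 1 ≤ j → 1 ≤ k →
      X (j + k) = X j * X k + d * Y j * Y k ∧ Y (j + k) = X j * Y k + Y j * X k)
    (hpell : (X 1 : ℤ) ^ 2 - (d : ℤ) * (Y 1 : ℤ) ^ 2 = 1)
    (hY1 : 0 < Y 1) (hX1 : 0 < X 1) (hd : 2 ≤ d) {j k : ℕ} (hj : 1 ≤ j)
    (hjk : j < k) : X j < X k := by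
  have hX1' : 2 ≤ X 1 := by
    by_contra hlt
    have h1 : X 1 = 1 := by omega
    have : 0 < (d : ℤ) * (Y 1 : ℤ) ^ 2 := by positivity
    rw [h1] at hpell
    push_cast at hpell
    linarith
  have step : ∀ i, 1 ≤ i → X i < X (i + 1) := by
    intro i hi
    have hpos : 0 < X i := by
      rcases Nat.eq_zero_or_pos (X i) with h0 | h0
      · have h := pell_eq hadd hpell hi
        have : 0 ≤ (d : ℤ) * (Y i : ℤ) ^ 2 := by positivity
        rw [h0] at h
        push_cast at h
        linarith
      · exact h0
    rw [(hadd i 1 hi le_rfl).1]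
    nlinarith [Nat.zero_le (d * Y i * Y 1)]
  induction k, hjk using Nat.le_induction with
  | base => exact step j hj
  | succ k hk ih => exact ih.trans (step k (by omega))

/-- The exponent `m` in `Xₙ = bᵐ - 1` is determined by `v₂(b)` and `v₂(X₁)`. -/
lemma two_adic_exponent
    (hadd : ∀ j k : ℕ, 1 ≤ j → 1 ≤ k →
      X (j + k) = X j * X k + d * Y j * Y k ∧ Y (j + k) = X j * Y k + Y j * X k)
    (hpell : (X 1 : ℤ) ^ 2 - (d : ℤ) * (Y 1 : ℤ) ^ 2 = 1)
    (hX1 : 0 < X 1) {b n m : ℕ} (hb : 2 ≤ b) (hn : 0 < n) (hneven : Even n)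
    (hm : 2 ≤ m) (hrep : X n = b ^ m - 1) :
    2 ∣ b ∧ m * padicValNat 2 b = 1 + 2 * padicValNat 2 (X 1) := by
  obtain ⟨k, rfl⟩ := hneven
  have hk : 1 ≤ k := by omega
  have hdbl := pell_double hadd hpell hk
  have hbm : b ^ m = 2 * X k ^ 2 := by
    have : 0 < b ^ m := by positivity
    omega
  have hb2 : 2 ∣ b := Nat.prime_two.dvd_of_dvd_pow ⟨_, hbm⟩
  refine ⟨hb2, ?_⟩
  have h4 : 2 * 2 ∣ 2 * X k ^ 2 := by
    rw [← hbm, ← sq]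
    exact (pow_dvd_pow_of_dvd hb2 2).trans (pow_dvd_pow b hm)
  have hXk : 2 ∣ X k :=
    Nat.prime_two.dvd_of_dvd_pow (Nat.dvd_of_mul_dvd_mul_left two_pos h4)
  rcases Nat.even_or_odd' k with ⟨j, rfl | rfl⟩
  · have h := pell_double hadd hpell (show 1 ≤ j by omega)
    rw [← two_mul] at h
    omega
  · obtain ⟨u, hu, h⟩ := odd_index_eq_mul_odd hadd hpell j
    have habs : X (2 * j + 1) = X 1 * u.natAbs := by
      have := congrArg Int.natAbs h
      simpa [Int.natAbs_mul] using this
    have hu' : ¬ 2 ∣ u.natAbs := by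
      have := Int.natAbs_odd.2 hu
      rw [← even_iff_two_dvd]
      exact Nat.not_even_iff_odd.2 this
    have hu0 : u.natAbs ≠ 0 := fun h0 => hu' (h0 ▸ dvd_zero 2)
    have hv := congrArg (padicValNat 2) hbm
    rw [habs, padicValNat.pow, padicValNat.mul two_ne_zero (by positivity),
      padicValNat.pow, padicValNat.mul hX1.ne' hu0,
      padicValNat.eq_zero_of_not_dvd hu', padicValNat.self one_lt_two] at hv
    simpa using hv

end

/-- There is at most one even index `n` such that `Xₙ + 1` is a power `bᵐ` of `b`
with `m > 1`. -/
theorem even_index_full_digit_unique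
    (b : ℕ) (hb : 2 ≤ b)
    (d : ℕ) (hd : 2 ≤ d) (hdns : ¬ IsSquare d)
    (X Y : ℕ → ℕ)
    (hX1 : 0 < X 1) (hY1 : 0 < Y 1)
    (hpell : (X 1 : ℤ) ^ 2 - (d : ℤ) * (Y 1 : ℤ) ^ 2 = 1)
    (hfund : ∀ x y : ℕ, 0 < x → 0 < y →
      (x : ℤ) ^ 2 - (d : ℤ) * (y : ℤ) ^ 2 = 1 → X 1 ≤ x)
    (hXY : ∀ n : ℕ, 1 ≤ n →
      (X n : ℝ) + (Y n : ℝ) * Real.sqrt d =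
        ((X 1 : ℝ) + (Y 1 : ℝ) * Real.sqrt d) ^ n)
    (n n' m m' : ℕ) (hn : 0 < n) (hn' : 0 < n')
    (hneven : Even n) (hn'even : Even n')
    (hm : 2 ≤ m) (hm' : 2 ≤ m')
    (hrep : X n = b ^ m - 1) (hrep' : X n' = b ^ m' - 1) :
    n = n' ∧ m = m' := by
  have hadd : ∀ j k : ℕ, 1 ≤ j → 1 ≤ k →
      X (j + k) = X j * X k + d * Y j * Y k ∧ Y (j + k) = X j * Y k + Y j * X k :=
    fun j k hj hk => pell_add hdns hXY hj hk
  obtain ⟨hb2, h⟩ := two_adic_exponent hadd hpell hX1 hb hn hneven hm hrep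
  obtain ⟨-, h'⟩ := two_adic_exponent hadd hpell hX1 hb hn' hn'even hm' hrep'
  have hv : 0 < padicValNat 2 b :=
    one_le_padicValNat_of_dvd (by omega) hb2
  have hmm : m = m' := Nat.eq_of_mul_eq_mul_right hv (h.trans h'.symm)
  refine ⟨?_, hmm⟩
  have hXX : X n = X n' := by rw [hrep, hrep', hmm]
  rcases lt_trichotomy n n' with hlt | heq | hlt
  · exact absurd hXX (pell_X_lt hadd hpell hY1 hX1 hd hn hlt).ne
  · exact heq
  · exact absurd hXX (pell_X_lt hadd hpell hY1 hX1 hd hn' hlt).ne'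
end

section
/- The sets of prime divisors of X₁, X₃ and X₅ are pairwise distinct; that is, no two of the three numbers X₁, X₃, X₅ have the same set of prime factors. -/
/-!
Write `x = X₁ ≥ 2`. Comparing coefficients of `1` and `√d` gives `X₃ = x * A` and `X₅ = x * B` with
`A = 4x² - 3` and `B = 16x⁴ - 20x² + 5`. A prime dividing both `x` and `A` is `3`, and `9 ∤ A`;
a prime dividing both `x` and `B` is `5`, and `25 ∤ B`. Since `A > 3` and `B > 5`, each of `A` and
`B` has a prime factor not dividing `x` (`exists_prime_dvd_not_dvd`). This separates `X₁` from `X₃`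
and from `X₅`. Moreover `B = A * (4x² - 2) - 1`, so `A` and `B` are coprime, and a prime factor of
`A` not dividing `x` divides `X₃` but not `X₅`.
-/

/-- The rational part of an element of `ℤ[√d]` is well defined. -/
lemma int_part_eq_of_add_mul_sqrt_eq {d : ℕ} (hd : ¬ IsSquare d) {a b a' b' : ℤ}
    (h : (a : ℝ) + b * Real.sqrt d = a' + b' * Real.sqrt d) : a = a' := by
  have hirr : Irrational (Real.sqrt d) := irrational_sqrt_natCast_iff.mpr hd
  by_cases hb : b = b'
  · subst hb
    exact_mod_cast add_right_cancel h
  · have hne : b - b' ≠ 0 := sub_ne_zero.mpr hb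
    refine absurd ?_ ((hirr.intCast_mul hne).ne_int (a' - a))
    push_cast
    linarith

/-- If all primes of `N` divided `x`, then `N` would be a power of `q`, hence `1` or `q` since
`q ^ 2 ∤ N`, against `q < N`. -/
lemma exists_prime_dvd_not_dvd {N x q : ℕ} (hq : q.Prime) (hN : q < N)
    (hcommon : ∀ p : ℕ, p.Prime → p ∣ N → p ∣ x → p = q)
    (hsq : q ∣ x → ¬ q ^ 2 ∣ N) : ∃ p : ℕ, p.Prime ∧ p ∣ N ∧ ¬ p ∣ x := by
  by_contra! hall
  have hpow : N = q ^ N.primeFactorsList.length :=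
    Nat.eq_prime_pow_of_unique_prime_dvd (by omega)
      fun {p} hp hpN => hcommon p hp hpN (hall p hp hpN)
  have hlen : 2 ≤ N.primeFactorsList.length := by
    by_contra! hlt
    have : q ^ N.primeFactorsList.length ≤ q ^ 1 := Nat.pow_le_pow_right hq.pos (by omega)
    rw [← hpow, pow_one] at this
    omega
  have hdvd : q ^ 2 ∣ N := by
    rw [hpow]
    exact pow_dvd_pow q hlen
  exact hsq (hall q hq ((dvd_pow_self q two_ne_zero).trans hdvd)) hdvd

/-- No two of the three numbers `X₁, X₃, X₅` have the same set of prime factors. -/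
theorem primeFactors_X1_X3_X5_pairwise_distinct
    (d : ℕ) (hd : 2 ≤ d) (hdns : ¬ IsSquare d)
    (X Y : ℕ → ℕ)
    (hX1 : 0 < X 1) (hY1 : 0 < Y 1)
    (hpell : (X 1 : ℤ) ^ 2 - (d : ℤ) * (Y 1 : ℤ) ^ 2 = 1)
    (hfund : ∀ x y : ℕ, 0 < x → 0 < y →
      (x : ℤ) ^ 2 - (d : ℤ) * (y : ℤ) ^ 2 = 1 → X 1 ≤ x)
    (hXY : ∀ n : ℕ, 1 ≤ n →
      (X n : ℝ) + (Y n : ℝ) * Real.sqrt d =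
        ((X 1 : ℝ) + (Y 1 : ℝ) * Real.sqrt d) ^ n)
    : (X 1).primeFactors ≠ (X 3).primeFactors ∧
      (X 1).primeFactors ≠ (X 5).primeFactors ∧
      (X 3).primeFactors ≠ (X 5).primeFactors := by
  obtain ⟨x, hx⟩ : ∃ x, x = X 1 := ⟨_, rfl⟩
  obtain ⟨y, hy⟩ : ∃ y, y = Y 1 := ⟨_, rfl⟩
  have h3 := hXY 3 (by norm_num)
  have h5 := hXY 5 (by norm_num)
  rw [← hx, ← hy] at h3 h5 hpell
  rw [← hx] at hX1
  rw [← hy] at hY1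
  rw [← hx]
  have hs : Real.sqrt d ^ 2 = d := Real.sq_sqrt (Nat.cast_nonneg d)
  have hx2 : 2 ≤ x := by
    by_contra! hlt
    obtain rfl : x = 1 := by omega
    have : (0 : ℤ) < d * (y : ℤ) ^ 2 := by positivity
    push_cast at hpell
    linarith
  have hdy : (d : ℤ) * (y : ℤ) ^ 2 = (x : ℤ) ^ 2 - 1 := by linarith
  have e3 : (X 3 : ℤ) = x * (4 * (x : ℤ) ^ 2 - 3) := by
    have := int_part_eq_of_add_mul_sqrt_eq hdns (a := X 3) (b := Y 3)
      (a' := (x : ℤ) ^ 3 + 3 * x * (d * (y : ℤ) ^ 2))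
      (b' := 3 * (x : ℤ) ^ 2 * y + d * (y : ℤ) ^ 3) (by
        push_cast
        rw [h3]
        linear_combination (3 * (x : ℝ) * y ^ 2 + y ^ 3 * Real.sqrt d) * hs)
    rw [this, hdy]
    ring
  have e5 : (X 5 : ℤ) = x * (16 * (x : ℤ) ^ 4 - 20 * (x : ℤ) ^ 2 + 5) := by
    have := int_part_eq_of_add_mul_sqrt_eq hdns (a := X 5) (b := Y 5)
      (a' := (x : ℤ) ^ 5 + 10 * (x : ℤ) ^ 3 * (d * (y : ℤ) ^ 2)
        + 5 * x * (d * (y : ℤ) ^ 2) ^ 2)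
      (b' := 5 * (x : ℤ) ^ 4 * y + 10 * (x : ℤ) ^ 2 * d * (y : ℤ) ^ 3
        + (d : ℤ) ^ 2 * (y : ℤ) ^ 5) (by
        push_cast
        rw [h5]
        linear_combination (10 * (x : ℝ) ^ 3 * y ^ 2 + 10 * (x : ℝ) ^ 2 * y ^ 3 * Real.sqrt d
          + (5 * x * y ^ 4 + y ^ 5 * Real.sqrt d) * (Real.sqrt d ^ 2 + d)) * hs)
    rw [this, hdy]
    ring
  have hx2' : (4 : ℤ) ≤ (x : ℤ) ^ 2 := by
    have : (2 : ℤ) ≤ x := by exact_mod_cast hx2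
    nlinarith
  obtain ⟨A, hA⟩ : ∃ A : ℕ, (A : ℤ) = 4 * (x : ℤ) ^ 2 - 3 :=
    ⟨_, Int.toNat_of_nonneg (by linarith)⟩
  obtain ⟨B, hB⟩ : ∃ B : ℕ, (B : ℤ) = 16 * (x : ℤ) ^ 4 - 20 * (x : ℤ) ^ 2 + 5 :=
    ⟨_, Int.toNat_of_nonneg (by nlinarith)⟩
  have hX3 : X 3 = x * A := by zify; rw [e3, hA]
  have hX5 : X 5 = x * B := by zify; rw [e5, hB]
  have hA3 : 3 < A := by zify; linarith
  have hB5 : 5 < B := by zify; nlinarith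
  have hAx : A + 3 = x * (4 * x) := by zify; rw [hA]; ring
  have hBx : B + x * (20 * x) = x * (16 * x ^ 3) + 5 := by zify; rw [hB]; ring
  have hAB : B + 1 = A * (4 * x ^ 2 - 2 : ℤ).toNat := by
    zify
    rw [Int.toNat_of_nonneg (by linarith), hA, hB]
    ring
  obtain ⟨p, hp, hpA, hpx⟩ := exists_prime_dvd_not_dvd (N := A) (x := x) Nat.prime_three hA3
    (fun p hp hpA hpx => (Nat.prime_dvd_prime_iff_eq hp Nat.prime_three).mp <|
      (Nat.dvd_add_right hpA).mp (hAx ▸ hpx.mul_right _))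
    (by
      rintro ⟨k, rfl⟩ ⟨m, hm⟩
      have : 9 * m + 3 = 9 * (4 * k ^ 2) := by
        rw [hm] at hAx
        linarith
      omega)
  obtain ⟨r, hr, hrB, hrx⟩ := exists_prime_dvd_not_dvd (N := B) (x := x) Nat.prime_five hB5
    (fun p hp hpB hpx => (Nat.prime_dvd_prime_iff_eq hp Nat.prime_five).mp <|
      (Nat.dvd_add_right (hpx.mul_right _)).mp (hBx ▸ dvd_add hpB (hpx.mul_right _)))
    (by
      rintro ⟨k, rfl⟩ ⟨m, hm⟩
      have : 25 * m + 25 * (20 * k ^ 2) = 25 * (400 * k ^ 4) + 5 := by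
        rw [hm] at hBx
        linarith
      omega)
  have hp3 : p ∈ (X 3).primeFactors := by
    rw [hX3, Nat.mem_primeFactors]
    exact ⟨hp, hpA.mul_left _, by positivity⟩
  have hr5 : r ∈ (X 5).primeFactors := by
    rw [hX5, Nat.mem_primeFactors]
    exact ⟨hr, hrB.mul_left _, by positivity⟩
  refine ⟨fun h => hpx ?_, fun h => hrx ?_, fun h => hpx ?_⟩
  · exact Nat.dvd_of_mem_primeFactors (h ▸ hp3)
  · exact Nat.dvd_of_mem_primeFactors (h ▸ hr5)
  · have hp5 : p ∣ x * B := hX5 ▸ Nat.dvd_of_mem_primeFactors (h ▸ hp3)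
    refine (hp.dvd_mul.mp hp5).resolve_right fun hpB => hp.one_lt.ne' ?_
    exact Nat.dvd_one.mp ((Nat.dvd_add_right hpB).mp (hAB ▸ hpA.mul_right _))
end

section
/- Suppose n₁ ≠ n₂ are odd positive integers with X_{n₁} = a₁(b^{m₁} − 1)/(b − 1) and X_{n₂} = a₂(b^{m₂} − 1)/(b − 1) for some a₁, a₂ ∈ {1, …, b−1} and positive integers m₁, m₂. Let n₃ = gcd(n₁, n₂) and m₃ = gcd(m₁, m₂). Then there is an integer a₃ with 1 ≤ a₃ ≤ (b−1)² such that X_{n₃} = a₃(b^{m₃} − 1)/(b − 1). -/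
/-!
The `X`-coordinates of the Pell solutions are the Chebyshev values `X n = T n (X 1)`
(`pell_eq_chebyshev`). From `2 * T k * T l = T (k + l) + T (k - l)`, a divisor `D` of `T l (x)`
satisfies `T (k + 2 * l) ≡ -T k` modulo `D`, so divisibility of `T k (x)` by `D` depends only on
`k` modulo `2 * l` (`dvd_T_add_iff`). For odd `n₁, n₂` with greatest common divisor `g`,
the number `n₁ - g` is a multiple of `2 * g`, hence an integer combination of `2 * n₁` and
`2 * n₂`; therefore `gcd (X n₁) (X n₂) = X g` (`gcd_T_dvd` and `T_dvd_T_of_odd`).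

On the repdigit side, `(b - 1) * X g = gcd (a₁ * (b ^ m₁ - 1)) (a₂ * (b ^ m₂ - 1))`. Since
`gcd (b ^ m₁ - 1) (b ^ m₂ - 1) = b ^ gcd m₁ m₂ - 1`, this is a multiple of
`b ^ gcd m₁ m₂ - 1` and a divisor of `a₁ * a₂ * (b ^ gcd m₁ m₂ - 1)`, so the cofactor `a₃`
divides `a₁ * a₂ ≤ (b - 1) ^ 2`.
-/

open Polynomial in
/-- The algebraic form of the Pell powers: `(x + y√d)ⁿ = Tₙ(x) + y Uₙ₋₁(x) √d`, where `s` plays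
the role of `√d`. -/
lemma pell_pow_eq (x y d : ℤ) (h : x ^ 2 - d * y ^ 2 = 1) (s : ℝ) (hs : s ^ 2 = d) (n : ℕ) :
    ((x : ℝ) + y * s) ^ n =
      (((Chebyshev.T ℤ n).eval x : ℤ) : ℝ) +
        ((y * (Chebyshev.U ℤ ((n : ℤ) - 1)).eval x : ℤ) : ℝ) * s := by
  induction n with
  | zero => simp
  | succ n ih =>
    have hT := congrArg (eval x) (Chebyshev.T_eq_X_mul_T_sub_pol_U ℤ ((n : ℤ) - 1))
    have hU := congrArg (eval x) (Chebyshev.U_eq_X_mul_U_add_T ℤ ((n : ℤ) - 1))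
    rw [show (n : ℤ) - 1 + 2 = n + 1 by ring] at hT
    rw [show (n : ℤ) - 1 + 1 = n by ring] at hT hU
    simp only [eval_sub, eval_add, eval_mul, eval_X, eval_one, eval_pow] at hT hU
    rw [pow_succ, ih]
    push_cast
    rw [add_sub_cancel_right, hT, hU]
    have h' : (x : ℝ) ^ 2 - d * (y : ℝ) ^ 2 = 1 := by exact_mod_cast h
    push_cast
    linear_combination
      (((Chebyshev.U ℤ ((n : ℤ) - 1)).eval x : ℤ) : ℝ) * ((y : ℝ) ^ 2 * hs - h')

open Polynomial in
lemma pell_eq_chebyshev (d : ℕ) (hdns : ¬ IsSquare d) (x y p q n : ℕ)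
    (h : (x : ℤ) ^ 2 - (d : ℤ) * (y : ℤ) ^ 2 = 1)
    (hpq : (p : ℝ) + q * Real.sqrt d = ((x : ℝ) + y * Real.sqrt d) ^ n) :
    (p : ℤ) = (Chebyshev.T ℤ n).eval (x : ℤ) := by
  have hirr : Irrational (Real.sqrt d) := irrational_sqrt_natCast_iff.mpr hdns
  have key := pell_pow_eq x y d h (Real.sqrt d) (by simp) n
  generalize (Chebyshev.T ℤ n).eval (x : ℤ) = t at *
  generalize (y : ℤ) * (Chebyshev.U ℤ ((n : ℤ) - 1)).eval (x : ℤ) = u at *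
  simp only [Int.cast_natCast] at key
  rw [← hpq] at key
  by_cases hqu : (q : ℤ) = u
  · subst hqu
    push_cast at key
    exact_mod_cast add_right_cancel key
  -- Distinct `√d`-coordinates would make `√d` the rational number `(t - p) / (q - u)`.
  · have hne : (q : ℝ) - u ≠ 0 := by
      intro h0
      exact hqu (by exact_mod_cast sub_eq_zero.mp h0)
    refine (hirr ?_).elim
    refine ⟨((t : ℚ) - p) / (q - u), ?_⟩
    push_cast
    rw [div_eq_iff hne]
    linear_combination -key

open Polynomial in
/-- If `D ∣ T l (x)`, then divisibility of `T k (x)` by `D` depends only on `k` modulo `2 * l`. -/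
lemma dvd_T_add_iff (x D l : ℤ) (hl : D ∣ (Chebyshev.T ℤ l).eval x) (k u : ℤ) :
    D ∣ (Chebyshev.T ℤ (k + 2 * l * u)).eval x ↔ D ∣ (Chebyshev.T ℤ k).eval x := by
  have step : ∀ j : ℤ,
      D ∣ (Chebyshev.T ℤ (j + 2 * l)).eval x ↔ D ∣ (Chebyshev.T ℤ j).eval x := by
    intro j
    have h := congrArg (eval x) (Chebyshev.T_mul_T ℤ (j + l) l)
    rw [show j + l + l = j + 2 * l by ring, show j + l - l = j by ring] at h
    simp only [eval_mul, eval_add, eval_ofNat] at h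
    have hD : D ∣ (Chebyshev.T ℤ (j + 2 * l)).eval x + (Chebyshev.T ℤ j).eval x :=
      h ▸ hl.mul_left _
    exact ⟨fun h' => (dvd_add_right h').mp hD, fun h' => (dvd_add_left h').mp hD⟩
  induction u using Int.induction_on with
  | zero => simp
  | succ i ih =>
    refine Iff.trans ?_ ih
    rw [← step (k + 2 * l * i)]
    ring_nf
  | pred i ih =>
    refine Iff.trans ?_ ih
    rw [← step (k + 2 * l * (-i - 1))]
    ring_nf

open Polynomial in
lemma T_dvd_T_of_odd (x g c : ℤ) (hc : Odd c) :
    (Chebyshev.T ℤ g).eval x ∣ (Chebyshev.T ℤ (g * c)).eval x := by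
  obtain ⟨u, rfl⟩ := hc
  rw [show g * (2 * u + 1) = g + 2 * g * u by ring]
  exact (dvd_T_add_iff x _ g dvd_rfl g u).mpr dvd_rfl

open Polynomial in
lemma gcd_T_dvd (x D : ℤ) (n₁ n₂ : ℕ) (h₁ : Odd n₁)
    (hD₁ : D ∣ (Chebyshev.T ℤ n₁).eval x) (hD₂ : D ∣ (Chebyshev.T ℤ n₂).eval x) :
    D ∣ (Chebyshev.T ℤ (Nat.gcd n₁ n₂ : ℕ)).eval x := by
  obtain ⟨c, hc⟩ := Nat.gcd_dvd_left n₁ n₂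
  have hcodd : Odd c := (Nat.odd_mul.mp (hc ▸ h₁)).2
  obtain ⟨v, rfl⟩ := hcodd
  have hbez := Nat.gcd_eq_gcd_ab n₁ n₂
  have hc' : (n₁ : ℤ) = (Nat.gcd n₁ n₂ : ℤ) * (2 * v + 1) := by exact_mod_cast hc
  -- `n₁ = g + 2gv`, and Bézout writes `g` as a combination of `n₁` and `n₂`.
  have hsplit : (n₁ : ℤ) = (Nat.gcd n₁ n₂ : ℤ) + 2 * n₁ * (Nat.gcdA n₁ n₂ * v)
      + 2 * n₂ * (Nat.gcdB n₁ n₂ * v) := by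
    linear_combination hc' + 2 * (v : ℤ) * hbez
  have h := hD₁
  rw [hsplit, dvd_T_add_iff x D n₂ hD₂, dvd_T_add_iff x D n₁ hD₁] at h
  exact h

/-- If `n₁ ≠ n₂` are odd positive indices whose `X`-coordinates are base-`b`
repdigits, then with `n₃ = gcd(n₁, n₂)` and `m₃ = gcd(m₁, m₂)` there is
`a₃ ∈ {1, …, (b-1)²}` with `X_{n₃} = a₃ (b^{m₃} - 1)/(b - 1)`. -/
theorem gcd_index_repdigit
    (b : ℕ) (hb : 2 ≤ b)
    (d : ℕ) (hd : 2 ≤ d) (hdns : ¬ IsSquare d)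
    (X Y : ℕ → ℕ)
    (hX1 : 0 < X 1) (hY1 : 0 < Y 1)
    (hpell : (X 1 : ℤ) ^ 2 - (d : ℤ) * (Y 1 : ℤ) ^ 2 = 1)
    (hfund : ∀ x y : ℕ, 0 < x → 0 < y →
      (x : ℤ) ^ 2 - (d : ℤ) * (y : ℤ) ^ 2 = 1 → X 1 ≤ x)
    (hXY : ∀ n : ℕ, 1 ≤ n →
      (X n : ℝ) + (Y n : ℝ) * Real.sqrt d =
        ((X 1 : ℝ) + (Y 1 : ℝ) * Real.sqrt d) ^ n)
    (n₁ a₁ m₁ n₂ a₂ m₂ : ℕ)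
    (hn₁ : 0 < n₁) (hn₂ : 0 < n₂) (hne : n₁ ≠ n₂)
    (hn₁odd : Odd n₁) (hn₂odd : Odd n₂)
    (ha₁ : 1 ≤ a₁ ∧ a₁ ≤ b - 1) (ha₂ : 1 ≤ a₂ ∧ a₂ ≤ b - 1)
    (hm₁ : 1 ≤ m₁) (hm₂ : 1 ≤ m₂)
    (hrep₁ : (b - 1) * X n₁ = a₁ * (b ^ m₁ - 1))
    (hrep₂ : (b - 1) * X n₂ = a₂ * (b ^ m₂ - 1)) :
    ∃ a₃ : ℕ, 1 ≤ a₃ ∧ a₃ ≤ (b - 1) ^ 2 ∧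
      (b - 1) * X (Nat.gcd n₁ n₂) = a₃ * (b ^ (Nat.gcd m₁ m₂) - 1) := by
  have hT : ∀ n : ℕ, 1 ≤ n → (X n : ℤ) = (Polynomial.Chebyshev.T ℤ n).eval (X 1 : ℤ) :=
    fun n hn => pell_eq_chebyshev d hdns (X 1) (Y 1) (X n) (Y n) n hpell (hXY n hn)
  have hg : 1 ≤ Nat.gcd n₁ n₂ := Nat.gcd_pos_of_pos_left _ hn₁
  have hdvd : ∀ n : ℕ, 1 ≤ n → Odd n → Nat.gcd n₁ n₂ ∣ n → X (Nat.gcd n₁ n₂) ∣ X n := by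
    rintro n hn hodd ⟨c, hc⟩
    have hcodd : Odd c := (Nat.odd_mul.mp (hc ▸ hodd)).2
    have h := T_dvd_T_of_odd (X 1) (Nat.gcd n₁ n₂ : ℕ) c (by exact_mod_cast hcodd)
    rw [← Nat.cast_mul, ← hc, ← hT n hn, ← hT _ hg] at h
    exact_mod_cast h
  have hgcd : Nat.gcd (X n₁) (X n₂) = X (Nat.gcd n₁ n₂) := by
    apply Nat.dvd_antisymm
    · have h := gcd_T_dvd (X 1) (Nat.gcd (X n₁) (X n₂) : ℕ) n₁ n₂ hn₁odd
        (by rw [← hT n₁ hn₁]; exact_mod_cast Nat.gcd_dvd_left _ _)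
        (by rw [← hT n₂ hn₂]; exact_mod_cast Nat.gcd_dvd_right _ _)
      rw [← hT _ hg] at h
      exact_mod_cast h
    · exact Nat.dvd_gcd (hdvd n₁ hn₁ hn₁odd (Nat.gcd_dvd_left _ _))
        (hdvd n₂ hn₂ hn₂odd (Nat.gcd_dvd_right _ _))
  have hB : Nat.gcd (b ^ m₁ - 1) (b ^ m₂ - 1) = b ^ Nat.gcd m₁ m₂ - 1 :=
    Nat.pow_sub_one_gcd_pow_sub_one b m₁ m₂
  have hBpos : 0 < b ^ Nat.gcd m₁ m₂ - 1 :=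
    Nat.sub_pos_of_lt (Nat.one_lt_pow (Nat.gcd_pos_of_pos_left _ hm₁).ne' hb)
  have hG : (b - 1) * X (Nat.gcd n₁ n₂) =
      Nat.gcd (a₁ * (b ^ m₁ - 1)) (a₂ * (b ^ m₂ - 1)) := by
    rw [← hgcd, ← Nat.gcd_mul_left, hrep₁, hrep₂]
  have hlow : b ^ Nat.gcd m₁ m₂ - 1 ∣ (b - 1) * X (Nat.gcd n₁ n₂) := by
    rw [hG, ← hB]
    exact Nat.dvd_gcd ((Nat.gcd_dvd_left _ _).mul_left _) ((Nat.gcd_dvd_right _ _).mul_left _)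
  have hup : (b - 1) * X (Nat.gcd n₁ n₂) ∣ a₁ * a₂ * (b ^ Nat.gcd m₁ m₂ - 1) := by
    rw [hG, ← hB, ← Nat.gcd_mul_left]
    refine Nat.dvd_gcd ((Nat.gcd_dvd_left _ _).trans ⟨a₂, by ring⟩)
      ((Nat.gcd_dvd_right _ _).trans ⟨a₁, by ring⟩)
  obtain ⟨a₃, ha₃⟩ := hlow
  rw [mul_comm _ a₃] at ha₃
  rw [ha₃] at hup
  have hdiv : a₃ ∣ a₁ * a₂ := Nat.dvd_of_mul_dvd_mul_right hBpos hup
  have hpos : 0 < a₁ * a₂ := Nat.mul_pos ha₁.1 ha₂.1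
  refine ⟨a₃, Nat.pos_of_dvd_of_pos hdiv hpos, ?_, ha₃⟩
  calc a₃ ≤ a₁ * a₂ := Nat.le_of_dvd hpos hdiv
    _ ≤ (b - 1) * (b - 1) := Nat.mul_le_mul ha₁.2 ha₂.2
    _ = (b - 1) ^ 2 := (sq _).symm
end

section
/- Assume the setup described in the context, with m ≥ 100. Then 2n/3 < ℓ < 2n + 1; in particular ℓ ≤ 2n. -/
/-!
Write `B = b ^ m`. The digit bounds on `a` and `c` give
`B / b ≤ X 1 ≤ (b - 1) * (B - 1)` and `(B ^ ℓ - 1) / (b - 1) ≤ X n ≤ B ^ ℓ - 1`,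
while Pell solutions satisfy `(X 1) ^ n ≤ X n ≤ (2 * X 1) ^ n`.

If `ℓ ≥ 2 * n + 1`, then `B ^ (2 * n + 1) - 1 ≤ (b - 1) * X n ≤ (b - 1) * B ^ (2 * n)`, because
`2 * X 1 ≤ B ^ 2`; this is absurd. If `3 * ℓ ≤ 2 * n`, then cubing `(X 1) ^ n ≤ X n < B ^ ℓ` gives
`(X 1) ^ (3 * n) < B ^ (2 * n)`, hence `B ^ n < b ^ (3 * n)`, which is absurd as `B ≥ b ^ 3`.
The bounds on `X n` are `pell_lower` (which needs the irrationality of `√d`) and `pell_upper`.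
-/

/-- The rational parts `u` of the powers of `x₁ + y₁ * √d` obey the recursion
`u ↦ u * x₁ + d * v * y₁`, so they dominate the powers of `x₁`. Since `√d` is irrational, `x` is
the rational part of the `n`-th power. -/
theorem pell_lower (d x₁ y₁ : ℕ) (hdns : ¬ IsSquare d) (n x y : ℕ)
    (h : (x : ℝ) + y * Real.sqrt d = ((x₁ : ℝ) + y₁ * Real.sqrt d) ^ n) : x₁ ^ n ≤ x := by
  have key : ∀ k : ℕ, ∃ u v : ℕ,
      (u : ℝ) + v * Real.sqrt d = ((x₁ : ℝ) + y₁ * Real.sqrt d) ^ k ∧ x₁ ^ k ≤ u := by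
    intro k
    induction k with
    | zero => exact ⟨1, 0, by simp, by simp⟩
    | succ k ih =>
      obtain ⟨u, v, huv, hu⟩ := ih
      refine ⟨u * x₁ + d * v * y₁, u * y₁ + v * x₁, ?_, ?_⟩
      · have hs : Real.sqrt d * Real.sqrt d = d := Real.mul_self_sqrt (Nat.cast_nonneg d)
        rw [pow_succ, ← huv]
        push_cast
        linear_combination (-(v : ℝ) * y₁) * hs
      · rw [pow_succ]
        exact (Nat.mul_le_mul_right x₁ hu).trans (Nat.le_add_right _ _)
  obtain ⟨u, v, huv, hu⟩ := key n
  have hirr : Irrational (Real.sqrt d) := irrational_sqrt_natCast_iff.mpr hdns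
  have hvy : (v : ℝ) = y := by
    by_contra hne
    have hne' : (v : ℝ) - y ≠ 0 := sub_ne_zero.mpr hne
    apply hirr
    refine ⟨((x : ℚ) - u) / ((v : ℚ) - y), ?_⟩
    push_cast
    rw [div_eq_iff hne']
    linear_combination h - huv
  have hxu : (u : ℝ) = x := by
    rw [hvy] at huv
    linarith
  have : u = x := by exact_mod_cast hxu
  omega

theorem pell_upper (d x₁ y₁ : ℕ) (hpell : (x₁ : ℤ) ^ 2 - (d : ℤ) * (y₁ : ℤ) ^ 2 = 1) (n x y : ℕ)
    (h : (x : ℝ) + y * Real.sqrt d = ((x₁ : ℝ) + y₁ * Real.sqrt d) ^ n) : x ≤ (2 * x₁) ^ n := by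
  have hp : (x₁ : ℝ) ^ 2 - (d : ℝ) * (y₁ : ℝ) ^ 2 = 1 := by exact_mod_cast hpell
  have hle : (y₁ : ℝ) * Real.sqrt d ≤ x₁ := by
    refine (pow_le_pow_iff_left₀ (by positivity) (Nat.cast_nonneg _) two_ne_zero).mp ?_
    rw [mul_pow, Real.sq_sqrt (Nat.cast_nonneg d)]
    linarith
  have h1 : ((x₁ : ℝ) + y₁ * Real.sqrt d) ^ n ≤ (2 * x₁) ^ n :=
    pow_le_pow_left₀ (by positivity) (by linarith) n
  have h2 : (0 : ℝ) ≤ y * Real.sqrt d := by positivity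
  have h3 : (x : ℝ) ≤ (2 * x₁) ^ n := by linarith
  exact_mod_cast h3

/-- In the setting of Problem 1 with `m ≥ 100`, one has `2n/3 < ℓ < 2n + 1`;
in particular `ℓ ≤ 2n`. -/
theorem ell_bounds_in_terms_of_n
    (b : ℕ) (hb : 2 ≤ b)
    (d : ℕ) (hd : 2 ≤ d) (hdns : ¬ IsSquare d)
    (X Y : ℕ → ℕ)
    (hX1 : 0 < X 1) (hY1 : 0 < Y 1)
    (hpell : (X 1 : ℤ) ^ 2 - (d : ℤ) * (Y 1 : ℤ) ^ 2 = 1)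
    (hfund : ∀ x y : ℕ, 0 < x → 0 < y →
      (x : ℤ) ^ 2 - (d : ℤ) * (y : ℤ) ^ 2 = 1 → X 1 ≤ x)
    (hXY : ∀ n : ℕ, 1 ≤ n →
      (X n : ℝ) + (Y n : ℝ) * Real.sqrt d =
        ((X 1 : ℝ) + (Y 1 : ℝ) * Real.sqrt d) ^ n)
    (a m : ℕ) (ha : 1 ≤ a ∧ a ≤ (b - 1) ^ 2) (hm : 100 ≤ m)
    (hrep1 : (b - 1) * X 1 = a * (b ^ m - 1))
    (n c ℓ : ℕ) (hn : 1 < n) (hnodd : Odd n)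
    (hc : 1 ≤ c ∧ c ≤ b - 1) (hℓ : 1 ≤ ℓ)
    (hrepn : (b - 1) * X n = c * (b ^ (m * ℓ) - 1)) :
    (2 * n : ℝ) / 3 < (ℓ : ℝ) ∧ (ℓ : ℝ) < 2 * n + 1 ∧ ℓ ≤ 2 * n := by
  have hlow := pell_lower d (X 1) (Y 1) hdns n (X n) (Y n) (hXY n hn.le)
  have hupp := pell_upper d (X 1) (Y 1) hpell n (X n) (Y n) (hXY n hn.le)
  obtain ⟨k, rfl⟩ : ∃ k, b = k + 1 := ⟨b - 1, by omega⟩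
  simp only [Nat.add_sub_cancel] at ha hrep1 hc hrepn
  have hk : 0 < k := by omega
  have hcube : (k + 1) ^ 3 ≤ (k + 1) ^ m := Nat.pow_le_pow_right (by omega) (by omega)
  rw [pow_mul] at hrepn
  generalize hB : (k + 1) ^ m = B at *
  have hBk : k + 1 ≤ B := (Nat.le_self_pow (by norm_num) _).trans hcube
  have hBℓ : 1 ≤ B ^ ℓ := Nat.one_le_pow _ _ (by omega)
  have hX1low : B ≤ (k + 1) * X 1 := by
    have h1 : B - 1 ≤ k * X 1 := by rw [hrep1]; exact Nat.le_mul_of_pos_left _ ha.1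
    have h2 : B ≤ k * X 1 + 1 := by omega
    nlinarith
  have hX1upp : X 1 ≤ k * B := by
    have h1 : k * X 1 ≤ k * (k * B) := by
      rw [hrep1, ← mul_assoc, ← pow_two]
      exact Nat.mul_le_mul ha.2 (Nat.sub_le _ _)
    exact Nat.le_of_mul_le_mul_left h1 hk
  have hXnupp : X n ≤ B ^ ℓ - 1 := by
    have h1 : k * X n ≤ k * (B ^ ℓ - 1) := by
      rw [hrepn]; exact Nat.mul_le_mul_right _ hc.2
    exact Nat.le_of_mul_le_mul_left h1 hk
  have hXnlow : B ^ ℓ ≤ k * X n + 1 := by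
    have h1 : B ^ ℓ - 1 ≤ k * X n := by rw [hrepn]; exact Nat.le_mul_of_pos_left _ hc.1
    omega
  have hU : ℓ ≤ 2 * n := by
    by_contra! hcon
    have h2k : 2 * k ≤ B := by
      have h0 : 2 * k ≤ (k + 1) ^ 3 := by
        have h1 : (k + 1) ^ 3 = k ^ 3 + 3 * k ^ 2 + 3 * k + 1 := by ring
        omega
      exact h0.trans hcube
    have h2X : 2 * X 1 ≤ B ^ 2 := by nlinarith only [h2k, hX1upp]
    have h1 : X n ≤ B ^ (2 * n) := by
      rw [pow_mul]
      exact hupp.trans (Nat.pow_le_pow_left h2X n)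
    have h2 : B ^ (2 * n + 1) ≤ B ^ ℓ := Nat.pow_le_pow_right (by omega) hcon
    have h3 : 1 < B ^ (2 * n) := Nat.one_lt_pow (by omega) (by omega)
    rw [pow_succ] at h2
    have h4 : B ^ (2 * n) * (k + 1) ≤ B ^ (2 * n) * B := Nat.mul_le_mul_left _ hBk
    have h5 : k * X n ≤ k * B ^ (2 * n) := Nat.mul_le_mul_left _ h1
    linarith
  have hL : 2 * n < 3 * ℓ := by
    by_contra! hcon
    have h1 : X 1 ^ n < B ^ ℓ := by omega
    have h2 : (X 1 ^ n) ^ 3 < B ^ (2 * n) :=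
      calc (X 1 ^ n) ^ 3 < (B ^ ℓ) ^ 3 := Nat.pow_lt_pow_left h1 (by norm_num)
        _ = B ^ (3 * ℓ) := by rw [← pow_mul, mul_comm]
        _ ≤ B ^ (2 * n) := Nat.pow_le_pow_right (by omega) hcon
    have h3 : B ^ n * B ^ (2 * n) < B ^ n * B ^ (2 * n) :=
      calc B ^ n * B ^ (2 * n) = (B ^ n) ^ 3 := by ring
        _ ≤ (((k + 1) * X 1) ^ n) ^ 3 :=
          Nat.pow_le_pow_left (Nat.pow_le_pow_left hX1low n) 3
        _ = ((k + 1) ^ 3) ^ n * (X 1 ^ n) ^ 3 := by rw [mul_pow, mul_pow, pow_right_comm]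
        _ ≤ B ^ n * (X 1 ^ n) ^ 3 := Nat.mul_le_mul_right _ (Nat.pow_le_pow_left hcube n)
        _ < B ^ n * B ^ (2 * n) :=
          Nat.mul_lt_mul_of_pos_left h2 (Nat.pow_pos (by omega))
    exact lt_irrefl _ h3
  have hU' : (ℓ : ℝ) ≤ 2 * n := by exact_mod_cast hU
  have hL' : (2 * n : ℝ) < 3 * ℓ := by exact_mod_cast hL
  exact ⟨by linarith, by linarith, hU⟩
end

section
/- Suppose X₁ = b^m − 1 for some integer m ≥ 1. Then for every odd positive integer n one has Xₙ ≡ n²·b^m − 1 (mod b^{2m}). -/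
/-!
Write `B = bᵐ`, so that `X₁ = B - 1` and `d Y₁² = X₁² - 1 = B² - 2B`. The powers of
`α = X₁ + Y₁√d` have the form `αⁿ = x + u Y₁√d` with integers `x`, `u`, and multiplying by `α` sends
`(x, u)` to `(X₁ x + (B² - 2B) u, x + X₁ u)`. Induction on `n` shows for every `n` that
`x ≡ (-1)ⁿ (1 - n² B) (mod B²)` and `u ≡ -(-1)ⁿ n (mod B)`; the weaker congruence for `u` is enough
because `u` enters the first coordinate multiplied by a multiple of `B`
(`exists_pow_eq_of_pell`). Since `√d` is irrational, `x = Xₙ`, and the claim is the case of odd `n`.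
-/

/-- The integer and `Y√d` parts of `(X + Y√d)ⁿ` when `X = B - 1`, written with explicit quotients:
`k` witnesses the congruence modulo `B²`, and `l` the one modulo `B`. -/
lemma exists_pow_eq_of_pell (B d Y : ℤ) (r : ℝ) (hr : r ^ 2 = d)
    (h : (B - 1) ^ 2 - d * Y ^ 2 = 1) (n : ℕ) :
    ∃ k l : ℤ, (((B - 1 : ℤ) : ℝ) + Y * r) ^ n =
      (((-1) ^ n * (1 - (n : ℤ) ^ 2 * B) + B ^ 2 * k : ℤ) : ℝ) +
        (((-(-1) ^ n * n + B * l) * Y : ℤ) : ℝ) * r := by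
  induction n with
  | zero => exact ⟨0, 0, by simp⟩
  | succ n ih =>
    obtain ⟨k, l, e⟩ := ih
    have hR : ((B : ℝ) - 1) ^ 2 - d * (Y : ℝ) ^ 2 = 1 := by exact_mod_cast h
    -- Solved from `x' = (B - 1) x + (B² - 2B) u` and `u' = x + (B - 1) u`.
    refine ⟨(B - 1) * k + (B - 2) * l - (-1) ^ n * n - (-1) ^ n * (n : ℤ) ^ 2,
      B * k + (B - 1) * l - (-1) ^ n * n - (-1) ^ n * (n : ℤ) ^ 2, ?_⟩
    rw [pow_succ, e]
    push_cast
    linear_combination (-(-1) ^ n * n + B * l) * (Y : ℝ) ^ 2 * hr - (-(-1) ^ n * n + B * l) * hR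

/-- If `X₁ = bᵐ - 1` with `m ≥ 1`, then for every odd positive `n`,
`Xₙ ≡ n² bᵐ - 1 (mod b^{2m})`. -/
theorem Xn_congruence_full_digit
    (b : ℕ) (hb : 2 ≤ b)
    (d : ℕ) (hd : 2 ≤ d) (hdns : ¬ IsSquare d)
    (X Y : ℕ → ℕ)
    (hX1 : 0 < X 1) (hY1 : 0 < Y 1)
    (hpell : (X 1 : ℤ) ^ 2 - (d : ℤ) * (Y 1 : ℤ) ^ 2 = 1)
    (hfund : ∀ x y : ℕ, 0 < x → 0 < y →
      (x : ℤ) ^ 2 - (d : ℤ) * (y : ℤ) ^ 2 = 1 → X 1 ≤ x)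
    (hXY : ∀ n : ℕ, 1 ≤ n →
      (X n : ℝ) + (Y n : ℝ) * Real.sqrt d =
        ((X 1 : ℝ) + (Y 1 : ℝ) * Real.sqrt d) ^ n)
    (m : ℕ) (hm : 1 ≤ m) (hrep1 : X 1 = b ^ m - 1) :
    ∀ n : ℕ, 0 < n → Odd n →
      (X n : ℤ) ≡ (n : ℤ) ^ 2 * (b : ℤ) ^ m - 1 [ZMOD (b : ℤ) ^ (2 * m)] := by
  intro n hn hodd
  have hirr : Irrational (Real.sqrt d) := irrational_sqrt_natCast_iff.mpr hdns
  have hX : (X 1 : ℤ) = (b : ℤ) ^ m - 1 := by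
    rw [hrep1, Nat.cast_sub (Nat.one_le_pow _ _ (by omega))]
    push_cast
    rfl
  rw [hX] at hpell
  obtain ⟨k, l, e⟩ := exists_pow_eq_of_pell ((b : ℤ) ^ m) d (Y 1) (Real.sqrt d)
    (by rw [Real.sq_sqrt (by positivity)]; simp) hpell n
  rw [← hX] at e
  have e2 := hXY n hn
  simp only [Int.cast_natCast] at e
  rw [e, hodd.neg_one_pow] at e2
  set x : ℤ := -1 * (1 - (n : ℤ) ^ 2 * (b : ℤ) ^ m) + ((b : ℤ) ^ m) ^ 2 * k with hx
  set y : ℤ := (-(-1) * (n : ℤ) + (b : ℤ) ^ m * l) * (Y 1 : ℤ) with hy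
  have hxX : (X n : ℤ) = x := by
    by_cases hYy : (Y n : ℤ) = y
    · have hYR : (Y n : ℝ) = (y : ℝ) := by exact_mod_cast hYy
      rw [hYR] at e2
      exact_mod_cast add_right_cancel e2
    · exfalso
      have h0 : ((Y n : ℤ) - y) ≠ 0 := sub_ne_zero.mpr hYy
      apply (hirr.intCast_mul h0).ne_int (x - X n)
      push_cast
      linear_combination e2
  rw [hxX, hx]
  apply Int.ModEq.symm
  rw [Int.modEq_iff_dvd]
  exact ⟨k, by ring⟩
end

section
/- Suppose X₁ = b^m − 1 for some integer m ≥ 100, and Xₙ = c(b^{mℓ} − 1)/(b − 1) for some odd integer n > 1 and integers c, ℓ with 1 ≤ c ≤ b − 1 and ℓ ≥ 1. Then c = b − 1, b^m divides n², b is odd, and m < 2·log n (natural logarithm). -/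
/-!
Put `B = bᵐ`, so `X₁ = B - 1`. The recurrence `X_{k+2} = 2 X₁ X_{k+1} - X_k` gives
`X_k ≡ (-1)ᵏ (1 - k² B) (mod B²)` (`pellA_congr`), the first-order expansion at `-1` of the
Chebyshev polynomial `T_k`. For odd `n` this reads `Xₙ ≡ -1 + n² B (mod B²)`.

Reducing `(b - 1) Xₙ = c (B^ℓ - 1)` modulo `B` gives `b - 1 ≡ c (mod B)`, and both sides lie in
`[0, B)`, so `c = b - 1` and `Xₙ = B^ℓ - 1`. Since `Xₙ > X₁`, necessarily `ℓ ≥ 2`, so reducing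
modulo `B²` gives `B ∣ n²`. As `n` is odd, so is `b`; hence `b ≥ 3` and `n² ≥ 3ᵐ > eᵐ`.
-/

/-- The integers `(A, B)` with `A + B √d = (x + y √d) ^ k`, defined by recursion on `k`. -/
def pellPair (d x y : ℤ) : ℕ → ℤ × ℤ
  | 0 => (1, 0)
  | k + 1 => (x * (pellPair d x y k).1 + d * y * (pellPair d x y k).2,
      x * (pellPair d x y k).2 + y * (pellPair d x y k).1)

lemma pellPair_real (d : ℕ) (x y : ℤ) (k : ℕ) :
    ((pellPair d x y k).1 : ℝ) + (pellPair d x y k).2 * Real.sqrt d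
      = ((x : ℝ) + y * Real.sqrt d) ^ k := by
  have hs : Real.sqrt d * Real.sqrt d = d := Real.mul_self_sqrt (Nat.cast_nonneg d)
  induction k with
  | zero => simp [pellPair]
  | succ k ih =>
    rw [pow_succ, ← ih]
    simp only [pellPair]
    push_cast
    linear_combination (-(y : ℝ) * (pellPair d x y k).2) * hs

lemma eq_of_add_mul_sqrt_eq {d : ℕ} (hd : ¬ IsSquare d) {p q r s : ℤ}
    (h : (p : ℝ) + q * Real.sqrt d = r + s * Real.sqrt d) : p = r := by
  have hirr : Irrational (Real.sqrt d) := irrational_sqrt_natCast_iff.mpr hd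
  by_cases hqs : q = s
  · subst hqs
    exact_mod_cast add_right_cancel h
  · exfalso
    have hne : (s - q : ℝ) ≠ 0 := by
      rw [sub_ne_zero]
      exact_mod_cast Ne.symm hqs
    refine hirr ⟨((p - r : ℤ) : ℚ) / ((s - q : ℤ) : ℚ), ?_⟩
    push_cast
    rw [div_eq_iff hne]
    linear_combination h

lemma pellA_rec {d x y : ℤ} (h : x ^ 2 - d * y ^ 2 = 1) (k : ℕ) :
    (pellPair d x y (k + 2)).1 = 2 * x * (pellPair d x y (k + 1)).1 - (pellPair d x y k).1 := by
  simp only [pellPair]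
  linear_combination (-(pellPair d x y k).1) * h

/-- First-order expansion of the `k`-th solution around `x = -1`. -/
lemma pellA_congr {d x y : ℤ} (h : x ^ 2 - d * y ^ 2 = 1) (k : ℕ) :
    (x + 1) ^ 2 ∣ (pellPair d x y k).1 - (-1) ^ k * (1 - (k : ℤ) ^ 2 * (x + 1)) := by
  induction k using Nat.twoStepInduction with
  | zero => simp [pellPair]
  | one => simp [pellPair]
  | more k ih0 ih1 =>
    obtain ⟨u, hu⟩ := ih0
    obtain ⟨v, hv⟩ := ih1
    rw [pellA_rec h]
    refine ⟨2 * x * v - u + 2 * (-1) ^ k * (k + 1) ^ 2, ?_⟩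
    push_cast at hv ⊢
    linear_combination 2 * x * hv - hu

lemma pellPair_pos {d x y : ℤ} (hd : 0 ≤ d) (hx : 1 ≤ x) (hy : 0 ≤ y) (k : ℕ) :
    1 ≤ (pellPair d x y k).1 ∧ 0 ≤ (pellPair d x y k).2 := by
  induction k with
  | zero => simp [pellPair]
  | succ k ih =>
    obtain ⟨h1, h2⟩ := ih
    simp only [pellPair]
    have := mul_nonneg (mul_nonneg hd hy) h2
    constructor
    · nlinarith
    · positivity

lemma pellA_lt_succ {d x y : ℤ} (hd : 0 ≤ d) (hx : 2 ≤ x) (hy : 0 ≤ y) (k : ℕ) :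
    (pellPair d x y k).1 < (pellPair d x y (k + 1)).1 := by
  obtain ⟨h1, h2⟩ := pellPair_pos hd (by linarith : 1 ≤ x) hy k
  have := mul_nonneg (mul_nonneg hd hy) h2
  simp only [pellPair]
  nlinarith


/-- If `X₁ = bᵐ - 1` with `m ≥ 100` and `Xₙ = c (b^{mℓ} - 1)/(b - 1)` for some odd
`n > 1`, `1 ≤ c ≤ b - 1`, `ℓ ≥ 1`, then `c = b - 1`, `bᵐ ∣ n²`, `b` is odd, and
`m < 2 log n`. -/
theorem case_a_eq_b_minus_one
    (b : ℕ) (hb : 2 ≤ b)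
    (d : ℕ) (hd : 2 ≤ d) (hdns : ¬ IsSquare d)
    (X Y : ℕ → ℕ)
    (hX1 : 0 < X 1) (hY1 : 0 < Y 1)
    (hpell : (X 1 : ℤ) ^ 2 - (d : ℤ) * (Y 1 : ℤ) ^ 2 = 1)
    (hfund : ∀ x y : ℕ, 0 < x → 0 < y →
      (x : ℤ) ^ 2 - (d : ℤ) * (y : ℤ) ^ 2 = 1 → X 1 ≤ x)
    (hXY : ∀ n : ℕ, 1 ≤ n →
      (X n : ℝ) + (Y n : ℝ) * Real.sqrt d =
        ((X 1 : ℝ) + (Y 1 : ℝ) * Real.sqrt d) ^ n)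
    (m : ℕ) (hm : 100 ≤ m) (hrep1 : X 1 = b ^ m - 1)
    (n c ℓ : ℕ) (hn : 1 < n) (hnodd : Odd n)
    (hc : 1 ≤ c ∧ c ≤ b - 1) (hℓ : 1 ≤ ℓ)
    (hrepn : (b - 1) * X n = c * (b ^ (m * ℓ) - 1)) :
    c = b - 1 ∧ b ^ m ∣ n ^ 2 ∧ Odd b ∧ (m : ℝ) < 2 * Real.log n := by

  obtain ⟨hc1, hc2⟩ := hc
  set B : ℕ := b ^ m with hB
  have hbB : b ≤ B := Nat.le_self_pow (by omega) b
  have h4B : 4 ≤ B := calc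
    4 = 2 ^ 2 := by norm_num
    _ ≤ 2 ^ m := Nat.pow_le_pow_right (by norm_num) (by omega)
    _ ≤ B := Nat.pow_le_pow_left hb m
  have hx : (X 1 : ℤ) = (B : ℤ) - 1 := by omega
  have hA : (X n : ℤ) = (pellPair d (X 1) (Y 1) n).1 := by
    refine eq_of_add_mul_sqrt_eq hdns (q := Y n) (s := (pellPair d (X 1) (Y 1) n).2) ?_
    rw [pellPair_real]
    push_cast
    exact hXY n hn.le
  have hcongr : (B : ℤ) ^ 2 ∣ (X n : ℤ) - (-1 + (n : ℤ) ^ 2 * B) := by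
    have h := pellA_congr hpell n
    rw [← hA, hnodd.neg_one_pow, hx] at h
    convert h using 1 <;> ring
  have hlt : X 1 < X n := by
    have hmono := strictMono_nat_of_lt_succ
      (pellA_lt_succ (d := d) (x := X 1) (y := Y 1) (by positivity) (by omega) (by positivity))
    have h := hmono hn
    simp only [← hA] at h
    simp [pellPair] at h
    exact h
  have hrepZ : ((b : ℤ) - 1) * X n = c * ((B : ℤ) ^ ℓ - 1) := by
    have h := congrArg (Nat.cast : ℕ → ℤ) hrepn
    rw [pow_mul, ← hB] at h
    push_cast [Nat.cast_sub (show 1 ≤ b by omega),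
      Nat.cast_sub (show 1 ≤ B ^ ℓ from Nat.one_le_pow _ _ (by omega))] at h
    exact h
  have hcb : c = b - 1 := by
    have hdvd : (B : ℤ) ∣ (b : ℤ) - 1 - c := by
      obtain ⟨u, hu⟩ := hcongr
      obtain ⟨v, hv⟩ := dvd_pow_self (B : ℤ) (show ℓ ≠ 0 by omega)
      refine ⟨((b : ℤ) - 1) * (n ^ 2 + B * u) - c * v, ?_⟩
      linear_combination ((b : ℤ) - 1) * hu - hrepZ - (c : ℤ) * hv
    have h0 := Int.eq_zero_of_dvd_of_nonneg_of_lt (by omega) (by omega) hdvd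
    omega
  have hXn : (X n : ℤ) = (B : ℤ) ^ ℓ - 1 := by
    have hcZ : (c : ℤ) = (b : ℤ) - 1 := by omega
    rw [hcZ] at hrepZ
    exact mul_left_cancel₀ (by omega) hrepZ
  have hℓ2 : 2 ≤ ℓ := by
    by_contra hcon
    obtain rfl : ℓ = 1 := by omega
    rw [pow_one] at hXn
    omega
  have hdiv : B ∣ n ^ 2 := by
    obtain ⟨u, hu⟩ := hcongr
    obtain ⟨v, hv⟩ := pow_dvd_pow (B : ℤ) hℓ2
    have hB0 : (B : ℤ) ≠ 0 := by omega
    have : (B : ℤ) ∣ (n : ℤ) ^ 2 := by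
      refine ⟨v - u, mul_left_cancel₀ hB0 ?_⟩
      linear_combination hv - hu + hXn
    exact_mod_cast this
  have hbodd : Odd b := by
    have hbn : b ∣ n ^ 2 := (dvd_pow_self b (by omega)).trans hdiv
    exact Odd.of_dvd_nat hnodd.pow hbn
  refine ⟨hcb, hdiv, hbodd, ?_⟩
  have hb3 : 3 ≤ b := by
    obtain ⟨k, rfl⟩ := hbodd
    omega
  have hle : (3 : ℝ) ^ m ≤ (n : ℝ) ^ 2 := by
    exact_mod_cast (Nat.pow_le_pow_left hb3 m).trans (Nat.le_of_dvd (by positivity) hdiv)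
  have hlog := Real.log_le_log (by positivity) hle
  rw [Real.log_pow, Real.log_pow] at hlog
  have h3 : 1 < Real.log 3 := by
    rw [Real.lt_log_iff_exp_lt (by norm_num)]
    linarith [Real.exp_one_lt_d9]
  have hm0 : (0 : ℝ) < m := by
    exact_mod_cast (by omega : 0 < m)
  push_cast at hlog
  nlinarith
end

section
/- Let b ≥ 2 be an integer, let a and c be positive integers with a ≠ b − 1, and let n be an odd positive integer. Let β and γ be complex numbers satisfying β + β⁻¹ = −2a/(b−1) and γ + γ⁻¹ = −2c/(b−1). Then it is impossible that simultaneously β⁻ⁿ = βⁿ and βⁿ = γⁱ for some i ∈ {1, −1}. -/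
/-!
Since `βⁿ` equals its own inverse, `βⁿ = ±1`, so `γ = βⁿ`; the trace of `γ` is negative, which forces
`βⁿ = -1`. As `n` is odd, `δ = -β` satisfies `δⁿ = 1`, and its trace `δ + δ⁻¹ = 2a/(b-1)` is a
positive rational number which is an algebraic integer of absolute value at most `2`, hence `1` or
`2`. The value `2` means `a = b - 1`, which is excluded; the value `1` gives `δ³ = -1`,
contradicting `δⁿ = 1` with `n` odd.
-/

/-- If `δ` is a root of unity with rational trace `δ + δ⁻¹`, this trace is a rational integer
and is at most `2`. -/
lemma exists_int_trace_of_pow_eq_one {n : ℕ} (hn : 0 < n) {δ : ℂ} (hδ : δ ^ n = 1) {q : ℚ}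
    (hq : δ + δ⁻¹ = (q : ℂ)) : ∃ k : ℤ, (k : ℚ) = q ∧ k ≤ 2 := by
  have h1 : IsIntegral ℤ δ := IsIntegral.of_pow hn (by rw [hδ]; exact isIntegral_one)
  have h2 : IsIntegral ℤ δ⁻¹ :=
    IsIntegral.of_pow hn (by rw [inv_pow, hδ, inv_one]; exact isIntegral_one)
  have h3 : IsIntegral ℤ (algebraMap ℚ ℂ q) := by
    have := h1.add h2
    rw [hq] at this
    simpa using this
  have h4 : IsIntegral ℤ q :=
    (isIntegral_algebraMap_iff (algebraMap ℚ ℂ).injective).1 h3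
  obtain ⟨k, hk⟩ := IsIntegrallyClosed.isIntegral_iff.1 h4
  have hk' : (k : ℚ) = q := by simpa using hk
  refine ⟨k, hk', ?_⟩
  have hnorm : ‖δ‖ = 1 := Complex.norm_eq_one_of_pow_eq_one hδ hn.ne'
  have h5 : ‖δ + δ⁻¹‖ ≤ 2 := by
    refine (norm_add_le _ _).trans ?_
    rw [norm_inv, hnorm]
    norm_num
  have h6 : δ + δ⁻¹ = (k : ℂ) := by
    rw [hq, ← hk']
    simp
  rw [h6, Complex.norm_intCast] at h5
  exact_mod_cast (le_abs_self _).trans h5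

/-- Let `b ≥ 2`, let `a, c` be positive integers with `a ≠ b - 1`, and let `n` be
odd. If `β, γ` are nonzero complex numbers with `β + β⁻¹ = -2a/(b-1)` and
`γ + γ⁻¹ = -2c/(b-1)`, then it is impossible that simultaneously `β⁻ⁿ = βⁿ` and
`βⁿ = γⁱ` for some `i ∈ {1, -1}`. -/
theorem no_degenerate_beta_gamma
    (b a c : ℕ) (hb : 2 ≤ b) (ha : 0 < a) (hc : 0 < c) (hab : a ≠ b - 1)
    (n : ℕ) (hn : 0 < n) (hnodd : Odd n)
    (β γ : ℂ) (hβ : β ≠ 0) (hγ : γ ≠ 0)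
    (hβeq : β + β⁻¹ = -2 * (a : ℂ) / ((b : ℂ) - 1))
    (hγeq : γ + γ⁻¹ = -2 * (c : ℂ) / ((b : ℂ) - 1)) :
    ¬ (β⁻¹ ^ n = β ^ n ∧ (β ^ n = γ ∨ β ^ n = γ⁻¹)) := by
  rintro ⟨hinv, hor⟩
  obtain ⟨m, rfl⟩ : ∃ m : ℕ, b = m + 1 := ⟨b - 1, by omega⟩
  have hm : 0 < m := by omega
  have hm0 : (m : ℂ) ≠ 0 := by exact_mod_cast hm.ne'
  have ham : a ≠ m := by simpa using hab
  push_cast at hβeq hγeq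
  rw [add_sub_cancel_right] at hβeq hγeq
  have hsq : β ^ n * β ^ n = 1 := by
    nth_rewrite 1 [← hinv]
    rw [inv_pow, inv_mul_cancel₀ (pow_ne_zero n hβ)]
  have hneg : β ^ n = -1 := by
    rcases mul_self_eq_one_iff.1 hsq with h | h
    · exfalso
      have hγ1 : γ = 1 := by
        rcases hor with h' | h'
        · rw [← h', h]
        · rw [← inv_inv γ, ← h', h, inv_one]
      -- `γ = 1` has trace `2`, whereas `-2c/m` is negative.
      rw [hγ1, eq_div_iff hm0] at hγeq
      have h2 : ((m + c : ℕ) : ℂ) = 0 := by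
        push_cast
        rw [inv_one] at hγeq
        linear_combination hγeq / 2
      have h3 : m + c = 0 := by exact_mod_cast h2
      omega
    · exact h
  have hδ : (-β) ^ n = 1 := by rw [hnodd.neg_pow, hneg, neg_neg]
  have htr : -β + (-β)⁻¹ = ((2 * a / m : ℚ) : ℂ) := by
    push_cast
    rw [inv_neg]
    linear_combination -hβeq
  obtain ⟨k, hk, hk2⟩ := exists_int_trace_of_pow_eq_one hn hδ htr
  have hmq : (0 : ℚ) < m := by exact_mod_cast hm
  have haq : (0 : ℚ) < a := by exact_mod_cast ha
  have hkpos : 0 < k := by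
    have : (0 : ℚ) < k := by rw [hk]; positivity
    exact_mod_cast this
  obtain rfl | rfl : k = 1 ∨ k = 2 := by omega
  · rw [← hk, inv_neg] at htr
    have hquad : β ^ 2 + β + 1 = 0 := by
      have := mul_inv_cancel₀ hβ
      push_cast at htr
      linear_combination -β * htr - this
    have hcube : β ^ 3 = 1 := by linear_combination (β - 1) * hquad
    have hcontra : (-1 : ℂ) ^ 3 = 1 := by
      rw [← hneg, ← pow_mul, mul_comm, pow_mul, hcube, one_pow]
    norm_num at hcontra
  · rw [eq_div_iff hmq.ne'] at hk
    push_cast at hk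
    have : (a : ℚ) = m := by linarith
    exact ham (by exact_mod_cast this)
end

section
/- Assume the setup described in the context. Then m < 2·10¹⁷ · b⁶ · log n (natural logarithm). -/
/-!
The bound has an elementary proof, by congruences modulo powers of the repunit
`R = (b ^ m - 1) / (b - 1)`, without linear forms in logarithms.

Write `x = X 1 = a R`, `M = b ^ m - 1 = (b - 1) R` and `n = 2k + 1`.
* As `X n` is the Chebyshev polynomial `T_n` at `x`, `X n ≡ (-1)^k n x (mod x³)`
  (`pell_odd_expansion`).
* `2 ((M + 1)^ℓ - 1) ≡ 2 ℓ M + ℓ (ℓ - 1) M² (mod M³)` (`two_mul_pow_sub_one`).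

Inserting both into `(b - 1) X n = c (b ^ (m ℓ) - 1)` and cancelling `(b - 1) R` gives
`2 (-1)^k n a ≡ 2 c ℓ + c ℓ (ℓ - 1) (b - 1) R (mod R²)`. If `(-1)^k n a ≠ c ℓ`, then `R` divides
the nonzero integer `2 ((-1)^k n a - c ℓ)`. Otherwise `R` divides `c ℓ (ℓ - 1) (b - 1)`, which is
nonzero because `ℓ = 1` would force `X n = n x`, contradicting `X n ≥ 2^(n-1) x`.
A size comparison gives `ℓ ≤ 4 n`, so `R ≤ 16 b² n²` in both cases, and since `b ^ (m - 1) ≤ R`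
this bounds `m` by `7 + 2 log₂ n`.
-/

theorem add_mul_sqrt_inj {d : ℕ} (hdns : ¬ IsSquare d) {p q r s : ℤ}
    (h : (p : ℝ) + q * Real.sqrt d = r + s * Real.sqrt d) : p = r ∧ q = s := by
  have hirr : Irrational (Real.sqrt d) := irrational_sqrt_natCast_iff.mpr hdns
  have hqs : q = s := by
    by_contra hne
    have h1 : ((q - s : ℤ) : ℝ) * Real.sqrt d = ((r - p : ℤ) : ℝ) := by
      push_cast; linarith
    exact (hirr.intCast_mul (sub_ne_zero.mpr hne)).ne_int _ h1
  subst hqs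
  refine ⟨?_, rfl⟩
  have : (p : ℝ) = r := by linarith
  exact_mod_cast this

/-- The values of `X n = T_n(x)` modulo `x³` and of `Y n / Y 1 = U_{n-1}(x)` modulo `x²`,
for `n = 2k + 1`. -/
theorem pell_odd_expansion {d x y : ℤ} (X Y : ℕ → ℤ) (hX1 : X 1 = x) (hY1 : Y 1 = y)
    (hpell : x ^ 2 - d * y ^ 2 = 1)
    (hX : ∀ n, 1 ≤ n → X (n + 1) = X n * x + d * (Y n * y))
    (hY : ∀ n, 1 ≤ n → Y (n + 1) = X n * y + Y n * x) (k : ℕ) :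
    ∃ A B : ℤ, X (2 * k + 1) = (-1) ^ k * (2 * k + 1) * x + x ^ 3 * A ∧
      Y (2 * k + 1) = y * ((-1) ^ k + x ^ 2 * B) := by
  induction k with
  | zero => exact ⟨0, 0, by simp [hX1], by simp [hY1]⟩
  | succ k ih =>
    obtain ⟨A, B, hA, hB⟩ := ih
    have hd : d * y ^ 2 = x ^ 2 - 1 := by linarith
    have e : 2 * (k + 1) + 1 = 2 * k + 1 + 1 + 1 := by ring
    rw [e, hX (2 * k + 1 + 1) (by omega), hY (2 * k + 1 + 1) (by omega),
      hX (2 * k + 1) (by omega), hY (2 * k + 1) (by omega), hA, hB,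
      pow_succ (-1 : ℤ) k]
    generalize ((-1 : ℤ)) ^ k = ε at *
    -- Two steps multiply by `(x + y √d)² = (2 x² - 1) + 2 x y √d`.
    refine ⟨2 * ε * (2 * k + 1) + (2 * x ^ 2 - 1) * A + 2 * ε + 2 * (x ^ 2 - 1) * B,
      2 * ε + (2 * x ^ 2 - 1) * B + 2 * (ε * (2 * k + 1) + x ^ 2 * A), ?_, ?_⟩
    · push_cast
      linear_combination
        (ε * (2 * k + 1) * x + x ^ 3 * A + 2 * x * (ε + x ^ 2 * B)) * hd
    · linear_combination y * (ε + x ^ 2 * B) * hd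

/-- The binomial expansion of `(M + 1) ^ l` up to order three, doubled to clear denominators. -/
theorem two_mul_pow_sub_one (M : ℤ) (l : ℕ) :
    ∃ D : ℤ, 2 * ((M + 1) ^ l - 1) = 2 * l * M + l * (l - 1) * M ^ 2 + D * M ^ 3 := by
  induction l with
  | zero => exact ⟨0, by simp⟩
  | succ l ih =>
    obtain ⟨D, hD⟩ := ih
    refine ⟨D * (M + 1) + l * (l - 1), ?_⟩
    rw [pow_succ]; push_cast
    linear_combination (M + 1) * hD

/-- The divisibility argument: the repunit `R` is at most polynomial in the other data. -/
theorem repunit_le {R β a c n l ε A D : ℤ} (hR : 0 < R) (hβ : 0 < β) (ha : 0 < a) (hc : 0 < c)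
    (hn : 0 < n) (hl : 1 ≤ l) (hε : ε = 1 ∨ ε = -1)
    (h : 2 * (β * (ε * n * (a * R) + (a * R) ^ 3 * A)) =
      c * (2 * l * (β * R) + l * (l - 1) * (β * R) ^ 2 + D * (β * R) ^ 3))
    (hl1 : l = 1 → c ≠ a * n) :
    R ≤ 2 * (c * l + a * n) ∨ R ≤ c * l * (l - 1) * β := by
  have h' : 2 * (ε * n * a + a ^ 3 * R ^ 2 * A) =
      c * (2 * l + l * (l - 1) * β * R + D * β ^ 2 * R ^ 2) := by
    have : (β * R) ≠ 0 := by positivity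
    apply mul_left_cancel₀ this
    linear_combination h
  have han : 0 < a * n := by positivity
  have hcl : 0 < c * l := by positivity
  by_cases hδ : ε * (a * n) = c * l
  · right
    have hdvd : R ∣ c * l * (l - 1) * β := by
      refine ⟨2 * a ^ 3 * A - c * D * β ^ 2, ?_⟩
      apply mul_left_cancel₀ hR.ne'
      linear_combination -h' + 2 * hδ
    have hl2 : l ≠ 1 := by
      intro e
      rcases hε with rfl | rfl
      · apply hl1 e; subst e; linarith
      · linarith
    have : 0 < l - 1 := by omega
    exact Int.le_of_dvd (by positivity) hdvd
  · left
    have hdvd : R ∣ 2 * (ε * (a * n) - c * l) := by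
      refine ⟨c * l * (l - 1) * β + c * D * β ^ 2 * R - 2 * a ^ 3 * R * A, ?_⟩
      linear_combination h'
    have hne : 2 * (ε * (a * n) - c * l) ≠ 0 := by
      intro h0; apply hδ; linarith
    have := Int.le_of_dvd (abs_pos.mpr hne) ((dvd_abs _ _).mpr hdvd)
    refine this.trans ?_
    rw [abs_le]
    rcases hε with rfl | rfl <;> constructor <;> linarith

theorem log_bound {b m n : ℕ} (hb : 2 ≤ b) (hn : 3 ≤ n)
    (h : b ^ (m - 1) ≤ 16 * b ^ 2 * n ^ 2) :
    (m : ℝ) < 2 * 10 ^ 17 * (b : ℝ) ^ 6 * Real.log n := by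
  have hlogn : 1 ≤ Real.log n := by
    rw [Real.le_log_iff_exp_le (by positivity)]
    have : (3 : ℝ) ≤ n := by exact_mod_cast hn
    linarith [Real.exp_one_lt_d9]
  have hb6 : (1 : ℝ) ≤ (b : ℝ) ^ 6 := one_le_pow₀ (by exact_mod_cast (by omega : 1 ≤ b))
  have key : (m : ℝ) ≤ 7 + 3 * Real.log n := by
    rcases lt_or_ge m 3 with hm | hm
    · have : (m : ℝ) < 3 := by exact_mod_cast hm
      linarith
    · obtain ⟨j, rfl⟩ : ∃ j, m = j + 3 := ⟨m - 3, by omega⟩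
      have h1 : b ^ j ≤ 16 * n ^ 2 := by
        have e : j + 3 - 1 = j + 2 := by omega
        rw [e, pow_add] at h
        have : 0 < b ^ 2 := by positivity
        nlinarith
      have h2 : 2 ^ j ≤ 16 * n ^ 2 := (Nat.pow_le_pow_left hb j).trans h1
      have h3 : (2 : ℝ) ^ j ≤ 2 ^ 4 * (n : ℝ) ^ 2 := by
        norm_num; exact_mod_cast h2
      have h4 := Real.log_le_log (by positivity) h3
      rw [Real.log_mul (by positivity) (by positivity), Real.log_pow, Real.log_pow,
        Real.log_pow] at h4
      push_cast at h4 ⊢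
      have := Real.log_two_gt_d9
      by_contra! hcon
      have : 3 * Real.log n < (j : ℝ) - 4 := by linarith
      nlinarith
  nlinarith

/-- Size comparison: `b ^ (m l) - 1 ≤ (b - 1) Xn`, while `Xn ≤ (2 x) ^ n ≤ b ^ ((m + 2) n)`. -/
theorem length_le {b m l n x Xn R a c : ℕ} (hb : 2 ≤ b) (hm : 1 ≤ m) (hn : 2 ≤ n)
    (hR : (b - 1) * R = b ^ m - 1) (hx : x = a * R) (ha : a ≤ (b - 1) ^ 2) (hc : 1 ≤ c)
    (hXn : Xn ≤ (2 * x) ^ n) (h : (b - 1) * Xn = c * (b ^ (m * l) - 1)) : l ≤ 4 * n := by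
  have hbm : b ^ m - 1 ≤ b ^ m := Nat.sub_le _ _
  have hxle : 2 * x ≤ b ^ (m + 2) := by
    have : x ≤ (b - 1) * b ^ m := by
      calc x ≤ (b - 1) ^ 2 * R := by rw [hx]; gcongr
        _ = (b - 1) * (b ^ m - 1) := by rw [← hR]; ring
        _ ≤ _ := by gcongr
    calc 2 * x ≤ b * (b * b ^ m) := by
          gcongr
          exact this.trans (by gcongr; omega)
      _ = _ := by ring
  have h1 : b ^ (m * l) - 1 ≤ b ^ (1 + (m + 2) * n) := by
    calc b ^ (m * l) - 1 ≤ c * (b ^ (m * l) - 1) := Nat.le_mul_of_pos_left _ hc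
      _ = (b - 1) * Xn := h.symm
      _ ≤ b * (b ^ (m + 2)) ^ n := by
          gcongr
          · omega
          · exact hXn.trans (by gcongr)
      _ = _ := by rw [← pow_mul]; ring
  have h2 : b ^ (m * l) < b ^ (2 + (m + 2) * n) := by
    have e : b ^ (2 + (m + 2) * n) = b * b ^ (1 + (m + 2) * n) := by ring
    have : 2 ≤ b ^ (1 + (m + 2) * n) :=
      hb.trans (Nat.le_self_pow (by omega) b)
    rw [e]; nlinarith [Nat.sub_add_cancel (Nat.one_le_pow (m * l) b (by omega))]
  have h3 := (Nat.pow_lt_pow_iff_right (by omega)).mp h2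
  by_contra! hcon
  have h4 : m * (4 * n) ≤ m * l := Nat.mul_le_mul_left _ hcon.le
  nlinarith

theorem repunit_bound_le {R β a c n l : ℕ} (hβ : 1 ≤ β) (hl : 1 ≤ l)
    (hln : l ≤ 4 * n) (hc : c ≤ β) (ha : a ≤ β ^ 2)
    (h : (R : ℤ) ≤ 2 * (c * l + a * n) ∨ (R : ℤ) ≤ c * l * (l - 1) * β) :
    R ≤ 16 * (β + 1) ^ 2 * n ^ 2 := by
  rcases h with h | h
  · have h' : R ≤ 2 * (c * l + a * n) := by exact_mod_cast h
    calc R ≤ 2 * (c * l + a * n) := h'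
      _ ≤ 2 * (β * (4 * n) + β ^ 2 * n) := by gcongr
      _ = (8 * β + 2 * β ^ 2) * n := by ring
      _ ≤ 16 * (β + 1) ^ 2 * n ^ 2 := by
          gcongr
          · nlinarith
          · exact Nat.le_self_pow two_ne_zero n
  · obtain ⟨i, rfl⟩ : ∃ i, l = i + 1 := ⟨l - 1, by omega⟩
    have h' : R ≤ c * (i + 1) * i * β := by
      push_cast at h
      rw [add_sub_cancel_right] at h
      exact_mod_cast h
    calc R ≤ c * (i + 1) * i * β := h'
      _ ≤ β * (4 * n) * (4 * n) * β := by gcongr; omega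
      _ = 16 * β ^ 2 * n ^ 2 := by ring
      _ ≤ 16 * (β + 1) ^ 2 * n ^ 2 := by gcongr; omega

/-- In the setting of Problem 1, `m < 2·10¹⁷ b⁶ log n`. -/
theorem m_bound_in_terms_of_n
    (b : ℕ) (hb : 2 ≤ b)
    (d : ℕ) (hd : 2 ≤ d) (hdns : ¬ IsSquare d)
    (X Y : ℕ → ℕ)
    (hX1 : 0 < X 1) (hY1 : 0 < Y 1)
    (hpell : (X 1 : ℤ) ^ 2 - (d : ℤ) * (Y 1 : ℤ) ^ 2 = 1)
    (hfund : ∀ x y : ℕ, 0 < x → 0 < y →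
      (x : ℤ) ^ 2 - (d : ℤ) * (y : ℤ) ^ 2 = 1 → X 1 ≤ x)
    (hXY : ∀ n : ℕ, 1 ≤ n →
      (X n : ℝ) + (Y n : ℝ) * Real.sqrt d =
        ((X 1 : ℝ) + (Y 1 : ℝ) * Real.sqrt d) ^ n)
    (a m : ℕ) (ha : 1 ≤ a ∧ a ≤ (b - 1) ^ 2) (hm : 1 ≤ m)
    (hrep1 : (b - 1) * X 1 = a * (b ^ m - 1))
    (n c ℓ : ℕ) (hn : 1 < n) (hnodd : Odd n)
    (hc : 1 ≤ c ∧ c ≤ b - 1) (hℓ : 1 ≤ ℓ)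
    (hrepn : (b - 1) * X n = c * (b ^ (m * ℓ) - 1)) :
    (m : ℝ) < 2 * 10 ^ 17 * (b : ℝ) ^ 6 * Real.log n := by
  have hrec : ∀ i, 1 ≤ i → (X (i + 1) : ℤ) = X i * X 1 + d * (Y i * Y 1) ∧
      (Y (i + 1) : ℤ) = X i * Y 1 + Y i * X 1 := by
    intro i hi
    apply add_mul_sqrt_inj hdns
    have h1 := hXY (i + 1) (by omega)
    rw [pow_succ, ← hXY i hi] at h1
    have hs : Real.sqrt d * Real.sqrt d = d := Real.mul_self_sqrt (by positivity)
    push_cast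
    rw [h1]
    linear_combination (Y i * Y 1 : ℝ) * hs
  have hx2 : 2 ≤ X 1 := by
    by_contra! hlt
    have e : X 1 = 1 := by omega
    rw [e] at hpell
    have : 0 < (d : ℤ) * (Y 1 : ℤ) ^ 2 := by positivity
    push_cast at hpell
    linarith
  have hgrow : ∀ i, 2 ^ i * X 1 ≤ X (i + 1) := by
    intro i
    induction i with
    | zero => simp
    | succ i ih =>
      have h1 := (hrec (i + 1) (by omega)).1
      have h2 : X (i + 1 + 1) = X (i + 1) * X 1 + d * (Y (i + 1) * Y 1) := by exact_mod_cast h1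
      rw [h2, pow_succ]
      nlinarith [Nat.zero_le (d * (Y (i + 1) * Y 1))]
  have hXn : X n ≤ (2 * X 1) ^ n := by
    have hy : (Y 1 : ℝ) * Real.sqrt d ≤ X 1 := by
      refine le_of_sq_le_sq ?_ (by positivity)
      rw [mul_pow, Real.sq_sqrt (by positivity)]
      have : (X 1 : ℝ) ^ 2 - d * (Y 1 : ℝ) ^ 2 = 1 := by exact_mod_cast hpell
      linarith
    have h1 : (X n : ℝ) ≤ (2 * X 1) ^ n := by
      calc (X n : ℝ) ≤ X n + Y n * Real.sqrt d := le_add_of_nonneg_right (by positivity)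
        _ = _ := hXY n hn.le
        _ ≤ _ := by gcongr; linarith
    exact_mod_cast h1
  -- `R` is the repunit `(b ^ m - 1) / (b - 1)`.
  obtain ⟨R, hR⟩ : (b - 1) ∣ b ^ m - 1 := Nat.sub_one_dvd_pow_sub_one b m
  have hxR : X 1 = a * R := by
    apply Nat.eq_of_mul_eq_mul_left (by omega : 0 < b - 1)
    rw [hrep1, hR]; ring
  have hℓn : ℓ ≤ 4 * n := length_le hb hm hn hR.symm hxR ha.2 hc.1 hXn hrepn
  have hRpos : 0 < R := Nat.pos_of_ne_zero (by rintro rfl; omega)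
  have hbR : b ^ (m - 1) ≤ R := by
    obtain ⟨j, rfl⟩ : ∃ j, m = j + 1 := ⟨m - 1, by omega⟩
    obtain ⟨β, rfl⟩ : ∃ β, b = β + 1 := ⟨b - 1, by omega⟩
    simp only [Nat.add_sub_cancel] at hR ⊢
    have hp := Nat.one_le_pow j (β + 1) (by omega)
    rw [pow_succ] at hR
    by_contra! hlt
    have h1 : β * (R + 1) ≤ β * (β + 1) ^ j := Nat.mul_le_mul_left _ hlt
    have h2 : (β + 1) ^ j * (β + 1) = β * (β + 1) ^ j + (β + 1) ^ j := by ring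
    have h3 : β * (R + 1) = β * R + β := by ring
    omega
  obtain ⟨k, rfl⟩ := hnodd
  obtain ⟨A, B, hA, -⟩ := pell_odd_expansion (fun i => (X i : ℤ)) (fun i => (Y i : ℤ)) rfl rfl
    hpell (fun i hi => (hrec i hi).1) (fun i hi => (hrec i hi).2) k
  obtain ⟨β, rfl⟩ : ∃ β, b = β + 1 := ⟨b - 1, by omega⟩
  simp only [Nat.add_sub_cancel] at *
  have hN : ((β : ℤ) + 1) ^ m = β * R + 1 := by
    have : (β + 1) ^ m = β * R + 1 := by
      have := Nat.one_le_pow m (β + 1) (by omega)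
      omega
    exact_mod_cast this
  have hrepn' : (β : ℤ) * X (2 * k + 1) = c * ((β * R + 1) ^ ℓ - 1) := by
    rw [← hN, ← pow_mul]
    have h1 := Nat.one_le_pow (m * ℓ) (β + 1) (by omega)
    zify [h1] at hrepn
    exact hrepn
  obtain ⟨D, hD⟩ := two_mul_pow_sub_one (β * R) ℓ
  have key := repunit_le (R := R) (β := β) (a := a) (c := c) (n := (2 * k + 1 : ℕ)) (l := ℓ)
    (ε := (-1) ^ k) (A := A) (D := D) (by exact_mod_cast hRpos) (by omega) (by omega) (by omega)
    (by omega) (by omega) (neg_one_pow_eq_or ℤ k)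
    (by
      have hxR' : (X 1 : ℤ) = a * R := by exact_mod_cast hxR
      rw [← hD, ← hxR']
      push_cast
      linear_combination 2 * hrepn' - 2 * (β : ℤ) * hA)
    (by
      intro h1 h2
      have h1' : ℓ = 1 := by exact_mod_cast h1
      have h2' : c = a * (2 * k + 1) := by exact_mod_cast h2
      subst h1'
      rw [mul_one, hR, h2'] at hrepn
      have h3 : X (2 * k + 1) = (2 * k + 1) * X 1 := by
        apply Nat.eq_of_mul_eq_mul_left (by omega : 0 < β)
        rw [hrepn, hxR]; ring
      have h4 := hgrow (2 * k)
      rw [h3] at h4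
      have h5 : 2 ^ (2 * k) ≤ 2 * k + 1 := Nat.le_of_mul_le_mul_right h4 hX1
      -- `4 ^ k ≥ 3 k + 1` by Bernoulli.
      have h6 := one_add_mul_le_pow (a := (3 : ℤ)) (by norm_num) k
      rw [pow_mul] at h5
      zify at h5
      norm_num at h5 h6
      omega)
  have hfin := repunit_bound_le (by omega) hℓ hℓn hc.2 ha.2 key
  exact log_bound hb (by omega) (hbR.trans hfin)
end

section
/- Assume the setup described in the context, and set α := X₁ + Y₁√d. Then 0 < (2c/(b−1))·b^{mℓ}·α^{−n} − 1 < 3/αⁿ < 1/α^{n−2}. -/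
/-!
Write `α = X₁ + Y₁√d` and `β = X₁ - Y₁√d`, so `αβ = 1`. Since `√d` is irrational, the relation
`Xₙ + Yₙ√d = αⁿ` may be conjugated (`sqrt_conj_pow`), which gives `2Xₙ = αⁿ + α⁻ⁿ`. As
`(2c/(b-1)) b^{mℓ} = 2Xₙ + 2c/(b-1)`, the quantity to be estimated equals
`α⁻ⁿ (α⁻ⁿ + 2c/(b-1))`; here `0 < α⁻ⁿ < 1` and `0 < 2c/(b-1) ≤ 2`. The last inequality is
`α² > 3`, which holds because `α ≥ 1 + √d > 2`.
-/

/-- Conjugation `√d ↦ -√d` is compatible with powers. The representation `p + q√d` of the power is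
given over `ℕ`, and the irrationality of `√d` identifies its coefficients. -/
lemma sqrt_conj_pow {d : ℕ} (hd : ¬ IsSquare d) (x y p q n : ℕ)
    (h : (p : ℝ) + q * Real.sqrt d = ((x : ℝ) + y * Real.sqrt d) ^ n) :
    (p : ℝ) - q * Real.sqrt d = ((x : ℝ) - y * Real.sqrt d) ^ n := by
  have hirr : Irrational (Real.sqrt d) := irrational_sqrt_natCast_iff.2 hd
  have hs : Real.sqrt d ^ 2 = d := Real.sq_sqrt (Nat.cast_nonneg d)
  have key : ∀ k : ℕ, ∃ u v : ℤ, (u : ℝ) + v * Real.sqrt d = ((x : ℝ) + y * Real.sqrt d) ^ k ∧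
      (u : ℝ) - v * Real.sqrt d = ((x : ℝ) - y * Real.sqrt d) ^ k := by
    intro k
    induction k with
    | zero => exact ⟨1, 0, by simp, by simp⟩
    | succ k ih =>
      obtain ⟨u, v, h1, h2⟩ := ih
      refine ⟨u * x + d * v * y, u * y + v * x, ?_, ?_⟩
      · rw [pow_succ, ← h1]
        push_cast
        linear_combination (-(v : ℝ) * y) * hs
      · rw [pow_succ, ← h2]
        push_cast
        linear_combination (-(v : ℝ) * y) * hs
  obtain ⟨u, v, h1, h2⟩ := key n
  have hlin : ((q : ℝ) - v) * Real.sqrt d = u - p := by linear_combination h - h1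
  have hqv : (q : ℝ) = v := by
    by_contra hne
    have hne' : (q : ℝ) - v ≠ 0 := sub_ne_zero.2 hne
    refine hirr ⟨((u : ℚ) - p) / (q - v), ?_⟩
    push_cast
    rw [div_eq_iff hne', ← hlin]
    ring
  have hup : (p : ℝ) = u := by
    rw [hqv] at hlin
    linarith
  rw [hqv, hup, h2]

/-- In the setting of Problem 1, with `α = X₁ + Y₁ √d`,
`0 < (2c/(b-1)) b^{mℓ} α⁻ⁿ - 1 < 3/αⁿ < 1/α^{n-2}`. -/
theorem linear_form_estimate
    (b : ℕ) (hb : 2 ≤ b)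
    (d : ℕ) (hd : 2 ≤ d) (hdns : ¬ IsSquare d)
    (X Y : ℕ → ℕ)
    (hX1 : 0 < X 1) (hY1 : 0 < Y 1)
    (hpell : (X 1 : ℤ) ^ 2 - (d : ℤ) * (Y 1 : ℤ) ^ 2 = 1)
    (hfund : ∀ x y : ℕ, 0 < x → 0 < y →
      (x : ℤ) ^ 2 - (d : ℤ) * (y : ℤ) ^ 2 = 1 → X 1 ≤ x)
    (hXY : ∀ n : ℕ, 1 ≤ n →
      (X n : ℝ) + (Y n : ℝ) * Real.sqrt d =
        ((X 1 : ℝ) + (Y 1 : ℝ) * Real.sqrt d) ^ n)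
    (a m : ℕ) (ha : 1 ≤ a ∧ a ≤ (b - 1) ^ 2) (hm : 1 ≤ m)
    (hrep1 : (b - 1) * X 1 = a * (b ^ m - 1))
    (n c ℓ : ℕ) (hn : 1 < n) (hnodd : Odd n)
    (hc : 1 ≤ c ∧ c ≤ b - 1) (hℓ : 1 ≤ ℓ)
    (hrepn : (b - 1) * X n = c * (b ^ (m * ℓ) - 1)) :
    0 < (2 * (c : ℝ) / ((b : ℝ) - 1)) * (b : ℝ) ^ (m * ℓ) *
        (((X 1 : ℝ) + (Y 1 : ℝ) * Real.sqrt d) ^ n)⁻¹ - 1 ∧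
      (2 * (c : ℝ) / ((b : ℝ) - 1)) * (b : ℝ) ^ (m * ℓ) *
        (((X 1 : ℝ) + (Y 1 : ℝ) * Real.sqrt d) ^ n)⁻¹ - 1 <
        3 / ((X 1 : ℝ) + (Y 1 : ℝ) * Real.sqrt d) ^ n ∧
      3 / ((X 1 : ℝ) + (Y 1 : ℝ) * Real.sqrt d) ^ n <
        1 / ((X 1 : ℝ) + (Y 1 : ℝ) * Real.sqrt d) ^ (n - 2) := by
  have hs : Real.sqrt d ^ 2 = d := Real.sq_sqrt (Nat.cast_nonneg d)
  have hconj := sqrt_conj_pow hdns (X 1) (Y 1) (X n) (Y n) n (hXY n hn.le)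
  have hpow := hXY n hn.le
  have hpellR : (X 1 : ℝ) ^ 2 - d * (Y 1 : ℝ) ^ 2 = 1 := by exact_mod_cast hpell
  have hαβ : ((X 1 : ℝ) + Y 1 * Real.sqrt d) * ((X 1 : ℝ) - Y 1 * Real.sqrt d) = 1 := by
    linear_combination hpellR - (Y 1 : ℝ) ^ 2 * hs
  have hα : 2 < (X 1 : ℝ) + Y 1 * Real.sqrt d := by
    have hx : (1 : ℝ) ≤ X 1 := by exact_mod_cast hX1
    have hy : (1 : ℝ) ≤ Y 1 := by exact_mod_cast hY1
    have hd' : (1 : ℝ) < d := by exact_mod_cast hd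
    have hsd : 1 < Real.sqrt d := Real.lt_sqrt_of_sq_lt (by simpa using hd')
    nlinarith
  set α : ℝ := (X 1 : ℝ) + Y 1 * Real.sqrt d with hαdef
  have hαn : 1 < α ^ n := one_lt_pow₀ (by linarith) (by omega)
  have hαn0 : 0 < α ^ n := by linarith
  have hβ : ((X 1 : ℝ) - Y 1 * Real.sqrt d) ^ n = (α ^ n)⁻¹ := by
    rw [eq_inv_of_mul_eq_one_right hαβ, inv_pow]
  have hX2 : 2 * (X n : ℝ) = α ^ n + (α ^ n)⁻¹ := by
    rw [← hβ, ← hconj, ← hpow]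
    ring
  have hb1 : (0 : ℝ) < (b : ℝ) - 1 := by
    have : (2 : ℝ) ≤ b := by exact_mod_cast hb
    linarith
  have hrepR : ((b : ℝ) - 1) * X n = c * ((b : ℝ) ^ (m * ℓ) - 1) := by
    have h := congrArg (Nat.cast (R := ℝ)) hrepn
    rw [Nat.cast_mul, Nat.cast_mul, Nat.cast_sub (by omega),
      Nat.cast_sub (Nat.one_le_pow _ _ (by omega))] at h
    simpa using h
  have hc0 : (0 : ℝ) < c := by exact_mod_cast hc.1
  have hcb : (c : ℝ) ≤ b - 1 := by
    have : c + 1 ≤ b := by omega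
    have : (c : ℝ) + 1 ≤ b := by exact_mod_cast this
    linarith
  set t : ℝ := 2 * (c : ℝ) / ((b : ℝ) - 1) with ht
  have ht0 : 0 < t := by positivity
  have ht2 : t ≤ 2 := by
    rw [ht, div_le_iff₀ hb1]
    linarith
  have hmain : t * (b : ℝ) ^ (m * ℓ) = α ^ n + (α ^ n)⁻¹ + t := by
    rw [← hX2, ht]
    field_simp
    linear_combination -hrepR
  have hinv0 : 0 < (α ^ n)⁻¹ := inv_pos.2 hαn0
  have hinv1 : (α ^ n)⁻¹ < 1 := inv_lt_one_of_one_lt₀ hαn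
  have hexpr : t * (b : ℝ) ^ (m * ℓ) * (α ^ n)⁻¹ - 1 = ((α ^ n)⁻¹ + t) * (α ^ n)⁻¹ := by
    rw [hmain]
    linear_combination mul_inv_cancel₀ hαn0.ne'
  refine ⟨?_, ?_, ?_⟩
  · rw [hexpr]
    positivity
  · rw [hexpr, div_eq_mul_inv]
    exact mul_lt_mul_of_pos_right (by linarith) hinv0
  · have hαk : 0 < α ^ (n - 2) := pow_pos (by linarith) _
    have hsplit : α ^ n = α ^ (n - 2) * α ^ 2 := by
      rw [← pow_add]
      congr 1
      omega
    rw [div_lt_div_iff₀ hαn0 hαk, hsplit]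
    have hα2 : 3 < α ^ 2 := by nlinarith
    linarith [mul_lt_mul_of_pos_left hα2 hαk]
end

section
/- Assume the setup described in the context, with m ≥ 100. Then n < 2·10¹⁸·(log b)⁴ (natural logarithm). -/
/-!
The bound follows from the stronger statement `n < 2 ^ 58`, since `2 · 10¹⁸ (log 2)⁴ > 2 ^ 58`.

Put `q = b - 1`, let `r = (b ^ m - 1) / q`, so that `X 1 = a r`, and `α = X 1 + Y 1 √d`.

*Small base.* Comparing sizes gives `(m - 1) n < m ℓ` and `ℓ ≤ 2 n`. Modulo powers of `r` one has
`X n ≡ ± n X 1` and `b ^ (m ℓ) = (1 + q r) ^ ℓ ≡ 1 + ℓ q r + ⋯`; the two representations then force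
`r` to be at most `b ^ 3 n ^ 2`, hence `b ^ (m - 4) ≤ n ^ 2` (`size_and_lower_bound`). As `m ≥ 100`,
both `b` and `m` are tiny compared with `n`: `b ^ 48 ≤ n`, and `m` is at most about `2 log₂ n`.

*A congruence of high order.* Let `g` be a root of `g ^ 2 + 2 c g + q ^ 2 = 0` with conjugate
`g' = -2 c - g`. The representation of `X n` is equivalent to
`(q α ^ n - g) (q α ^ n - g') = 2 q c α ^ n b ^ (m ℓ)`. Hence, for a prime ideal `P` above a prime
factor of `b` in a number field of degree at most `4` containing `α` and `g`, one of the factors on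
the left lies in `P ^ ⌊m ℓ / 2⌋` (`exists_prime_ideal`).

*Interpolation determinants.* Such a strong `P`-adic proximity of `q α ^ n` and `g` is ruled out by
a two-logarithms argument of Laurent's type (`interpolation_inequality`). With `w ≥ 1` such that
`α ^ w ≡ 1 mod P`, consider the functions `x ↦ x (x - 1) ⋯ (x - k + 1) (α ^ w) ^ (l x)`, for `k < K`
and `l < L`, at the points `x = t n + s`, `t < R`, `s < S`, where the power `α ^ n` is replaced by
`g / q`. A zero estimate (`grid_zero_estimate`) produces a nonzero `K L × K L` minor of the matrix
of values. Up to `P ^ T`, each row is a combination of the same `Q` vectors of binomial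
coefficients, so the minor lies in `P ^ (T (K L - Q))` (`det_mem_pow_of_low_rank`), whereas its
conjugates are bounded trivially. Comparing with the norm gives an inequality which fails for a
suitable choice of `K, L, R, S, T, Q` once `n ≥ 2 ^ 58`.
-/

/-! ### Interpolation determinants and the zero estimate -/

section

open Polynomial

/-- If the rows of `M` are, up to errors in `P ^ T`, combinations of the same `Q` vectors `e t`,
then expanding the determinant by multilinearity leaves only terms with at most `Q` rows not taken
from the errors. -/
theorem det_mem_pow_of_low_rank {A ι : Type*} [CommRing A] [Fintype ι] [DecidableEq ι]
    (P : Ideal A) (T Q : ℕ) (M : Matrix ι ι A) (c : ι → Fin Q → A) (e : Fin Q → ι → A)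
    (err : ι → ι → A) (herr : ∀ j i, err j i ∈ P ^ T)
    (hM : ∀ j i, M j i = ∑ t, c j t * e t i + err j i) :
    M.det ∈ P ^ (T * (Fintype.card ι - Q)) := by
  classical
  let row : ι → Option (Fin Q) → ι → A := fun j o => o.elim (err j) (fun t => c j t • e t)
  have hrow : M = fun j => ∑ o, row j o := by
    funext j i
    rw [hM, Fintype.sum_option]
    simp [row, add_comm]
  have hdet : M.det = ∑ φ : ι → Option (Fin Q), Matrix.det (Matrix.of fun j => row j (φ j)) := by
    conv_lhs => rw [hrow]
    exact MultilinearMap.map_sum (Matrix.detRowAlternating (R := A) (n := ι)).toMultilinearMap row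
  rw [hdet]
  refine Ideal.sum_mem _ fun φ _ => ?_
  by_cases hinj : ∃ j j' : ι, j ≠ j' ∧ φ j = φ j' ∧ φ j ≠ none
  · obtain ⟨j, j', hne, heq, hnone⟩ := hinj
    obtain ⟨t, ht⟩ := Option.ne_none_iff_exists'.1 hnone
    -- two rows are multiples of the same vector `e t`
    have h0 : Matrix.det (Matrix.of fun i => row i (φ i)) = 0 := by
      let M' : Matrix ι ι A := Matrix.of fun i => if i = j ∨ i = j' then e t else row i (φ i)
      have h1 : M'.det = 0 := Matrix.det_zero_of_row_eq hne (by funext k; simp [M'])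
      have h2 : (Matrix.of fun i => row i (φ i)) =
          Matrix.of fun i k => (if i = j ∨ i = j' then c i t else 1) * M' i k := by
        ext i k
        by_cases hi : i = j ∨ i = j'
        · have : φ i = some t := by rcases hi with rfl | rfl <;> simp_all
          simp [M', hi, this, row]
        · simp [M', hi]
      rw [h2, Matrix.det_mul_column, h1, mul_zero]
    rw [h0]; exact Ideal.zero_mem _
  · push Not at hinj
    have hcard : Fintype.card ι - Q ≤ (Finset.univ.filter fun j => φ j = none).card := by
      have h1 : (Finset.univ.filter fun j => ¬ φ j = none).card ≤ Q := by
        have : (Finset.univ.filter fun j => ¬ φ j = none).card ≤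
            (Finset.univ.image (some : Fin Q → Option (Fin Q))).card := by
          refine Finset.card_le_card_of_injOn φ ?_ ?_
          · intro j hj
            obtain ⟨t, ht⟩ := Option.ne_none_iff_exists'.1 (by simpa using hj)
            simp [ht]
          · intro j hj j' hj' h
            by_contra hne
            exact (by simpa using hj : φ j ≠ none) (hinj j j' hne h)
        exact this.trans (Finset.card_image_le.trans (by simp))
      have h2 := Finset.card_filter_add_card_filter_not (s := (Finset.univ : Finset ι)) (fun j => φ j = none)
      rw [Finset.card_univ] at h2
      omega
    rw [Matrix.det_apply]
    refine Ideal.sum_mem _ fun σ _ => ?_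
    have hprod : ∏ i, row (σ i) (φ (σ i)) i ∈ P ^ (T * (Fintype.card ι - Q)) := by
      rw [← Equiv.prod_comp σ.symm]
      simp only [Equiv.apply_symm_apply]
      have h3 : ∏ j, row j (φ j) (σ.symm j) ∈ ∏ j, (if φ j = none then P ^ T else ⊤ : Ideal A) := by
        refine Ideal.prod_mem_prod fun j _ => ?_
        by_cases h : φ j = none
        · simp [h, row, herr]
        · simp [h]
      rw [Finset.prod_ite, Finset.prod_const] at h3
      have h4 := Ideal.mul_le_left h3
      rw [← pow_mul] at h4
      exact Ideal.pow_le_pow_right (Nat.mul_le_mul_left T hcard) h4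
    rw [Units.smul_def, zsmul_eq_mul]
    exact Ideal.mul_mem_left _ _ hprod

/-- The binomial expansion of `x (x - 1) ⋯ (x - k + 1) (1 + η) ^ x`. The coefficient of `x.choose i`
is divisible by `η ^ (i - k)` and does not depend on `x`; `B` is any cutoff beyond `x`. -/
theorem descFactorial_mul_pow {A : Type*} [CommRing A] (η : A) (k x : ℕ) (B : ℕ) (hB : x < B) :
    (x.descFactorial k : A) * (1 + η) ^ x =
      ∑ i ∈ Finset.range B, (k.factorial * (1 + η) ^ k * (i.choose k) * η ^ (i - k)) * (x.choose i) := by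
  have hterm : ∀ i, ¬ k ≤ i → (k.factorial * (1 + η) ^ k * (i.choose k) * η ^ (i - k)) * (x.choose i : A) = 0 := by
    intro i hi
    rw [Nat.choose_eq_zero_of_lt (not_le.1 hi)]; simp
  by_cases hk : k ≤ x
  · obtain ⟨y, rfl⟩ := Nat.exists_eq_add_of_le hk
    obtain ⟨z, rfl⟩ := Nat.exists_eq_add_of_lt hB
    have e1 : k + y + z + 1 = k + ((y + 1) + z) := by ring
    rw [e1, Finset.sum_range_add, Finset.sum_eq_zero, zero_add, Finset.sum_range_add,
      Finset.sum_eq_zero (s := Finset.range z), add_zero, pow_add, add_comm 1 η,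
      add_pow η 1 y, Nat.descFactorial_eq_factorial_mul_choose, Finset.mul_sum, Finset.mul_sum]
    · refine Finset.sum_congr rfl fun i hi => ?_
      have := Nat.choose_mul (n := k + y) (k := k + i) (s := k) (by omega)
      have h2 : ((k + y).choose (k + i) : A) * ((k + i).choose k) = (k + y).choose k * y.choose i := by
        have h3 : k + y - k = y := by omega
        have h4 : k + i - k = i := by omega
        rw [h3, h4] at this
        have h5 := congrArg (Nat.cast : ℕ → A) this
        push_cast at h5
        exact h5
      have h4 : k + i - k = i := by omega
      rw [h4]
      push_cast
      linear_combination (-(k.factorial : A) * (η + 1) ^ k * η ^ i) * h2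
    · intro i _
      rw [Nat.choose_eq_zero_of_lt (n := k + y) (by omega)]; simp
    · intro i hi
      exact hterm i (by have := Finset.mem_range.1 hi; omega)
  · rw [Nat.descFactorial_eq_zero_iff_lt.2 (not_le.1 hk)]
    symm
    rw [Nat.cast_zero, zero_mul]
    refine Finset.sum_eq_zero fun i _ => ?_
    by_cases hi : k ≤ i
    · rw [Nat.choose_eq_zero_of_lt (n := x) (by omega)]; simp
    · exact hterm i hi

/-- A matrix with trivial left kernel has a nonzero minor of maximal size. -/
theorem exists_det_ne_zero {F ι κ : Type*} [Field F] [Fintype ι] [DecidableEq ι] [Fintype κ]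
    (M : Matrix ι κ F) (h : ∀ v, Matrix.vecMul v M = 0 → v = 0) :
    ∃ f : ι → κ, (M.submatrix id f).det ≠ 0 := by
  classical
  have hli : LinearIndependent F M.row := by
    rw [← Matrix.vecMul_injective_iff]
    intro v v' hv
    have : Matrix.vecMul (v - v') M = 0 := by
      rw [Matrix.sub_vecMul]; exact sub_eq_zero.2 hv
    exact sub_eq_zero.1 (h _ this)
  have hrank := hli.rank_matrix
  obtain ⟨κ', a, ha, hspan, hind⟩ := exists_linearIndependent' F M.col
  have : Fintype κ' := Fintype.ofInjective a ha
  have hc : Fintype.card κ' = Fintype.card ι := by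
    rw [← hrank, Matrix.rank_eq_finrank_span_cols, ← hspan, finrank_span_eq_card hind]
  obtain ⟨e⟩ := Fintype.card_eq.1 hc.symm
  refine ⟨a ∘ e, ?_⟩
  have h1 : LinearIndependent F (M.submatrix id (a ∘ e)).col := hind.comp e e.injective
  rw [Matrix.linearIndependent_cols_iff_isUnit, Matrix.isUnit_iff_isUnit_det] at h1
  exact h1.ne_zero

/-- The functions `x ↦ p j (x) (y j) ^ x` with distinct `y j` have a nonzero Casoratian: its top
coefficient is governed by the Vandermonde matrix of `y`. -/
theorem det_shift_ne_zero {F : Type*} [Field F] {q : ℕ} (y : Fin q → F)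
    (hy : Function.Injective y) (p : Fin q → F[X]) (hp : ∀ j, p j ≠ 0) :
    (Matrix.of fun i j : Fin q => C (y j ^ (i : ℕ)) * taylor ((i : ℕ) : F) (p j)).det ≠ 0 := by
  classical
  intro h0
  obtain ⟨v, hv0, hv⟩ := Matrix.exists_vecMul_eq_zero_iff.2 h0
  set D := Finset.univ.sup fun i => (v i).natDegree with hD
  have hle : ∀ i, (v i).natDegree ≤ D := fun i =>
    Finset.le_sup (f := fun i => (v i).natDegree) (Finset.mem_univ i)
  -- the top coefficients of `v` form a left kernel vector of a Vandermonde matrix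
  have hker : Matrix.mulVec (Matrix.vandermonde y) (fun i => (v i).coeff D) = 0 := by
    funext j
    have h1 := congrFun hv j
    have h2 := congrArg (fun f => f.coeff (D + (p j).natDegree)) h1
    simp only [Matrix.vecMul, dotProduct, Matrix.of_apply, finsetSum_coeff, Pi.zero_apply,
      coeff_zero] at h2
    have h3 : ∀ i : Fin q, (v i * (C (y j ^ (i : ℕ)) * taylor ((i : ℕ) : F) (p j))).coeff
        (D + (p j).natDegree) = (y j ^ (i : ℕ) * (v i).coeff D) * (p j).leadingCoeff := by
      intro i
      rw [← mul_assoc, mul_comm (v i), mul_assoc, coeff_C_mul,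
        coeff_mul_add_eq_of_natDegree_le (hle i) (by rw [natDegree_taylor]), mul_assoc]
      rw [coeff_taylor_natDegree]
    simp only [h3] at h2
    rw [← Finset.sum_mul] at h2
    have := (mul_eq_zero.1 h2).resolve_right (leadingCoeff_ne_zero.2 (hp j))
    simpa [Matrix.mulVec, dotProduct, Matrix.vandermonde_apply] using this
  have hdet := Matrix.det_vandermonde_ne_zero_iff.2 hy
  have hz : (fun i => (v i).coeff D) = 0 := by
    by_contra hne
    exact hdet (Matrix.exists_mulVec_eq_zero_iff.1 ⟨_, hne, hker⟩)
  apply hv0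
  obtain ⟨i₀, hi₀⟩ := Function.ne_iff.1 hv0
  obtain ⟨i, _, hi⟩ := Finset.exists_mem_eq_sup Finset.univ ⟨i₀, Finset.mem_univ _⟩
    fun i => (v i).natDegree
  have hi0 : v i = 0 := by
    rw [← leadingCoeff_eq_zero, leadingCoeff, ← hi]
    exact congrFun hz i
  have hD0 : D = 0 := by rw [hD, hi, hi0]; simp
  funext j
  have h5 : (v j).natDegree = 0 := by have := hle j; omega
  have h6 := congrFun hz j
  rw [Pi.zero_apply, ← leadingCoeff_eq_zero, leadingCoeff, h5, ← hD0]
  exact h6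

/-- Zero estimate: an exponential polynomial `∑ v k l · (x)_k · (θ r y ^ s) ^ l`, with
`(x)_k` the falling factorial, vanishing at all points `x = r n + s` with `r < R`, `s < S` is zero.
For fixed `r`, shifting `s` by `0, 1, …` turns its coefficients into a kernel vector of a
Casoratian, a nonzero polynomial in `x` of degree less than `L K`, which would therefore have
`R (S - L)` roots. -/
theorem grid_zero_estimate {F : Type*} [Field F] [CharZero F] (y : F) (hy0 : y ≠ 0)
    (hy : Function.Injective fun i : ℕ => y ^ i) (n K L R S : ℕ) (θ : ℕ → F)
    (hθ : ∀ r, r < R → θ r ≠ 0) (hK : 1 ≤ K) (hS : S ≤ n) (hpts : L * K ≤ R * (S - L))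
    (v : Fin K × Fin L → F)
    (hv : ∀ r < R, ∀ s < S, ∑ kl : Fin K × Fin L,
      v kl * (((r * n + s).descFactorial kl.1 : F) * (θ r * y ^ s) ^ (kl.2 : ℕ)) = 0) :
    v = 0 := by
  classical
  let p : Fin L → F[X] := fun l => ∑ k : Fin K, C (v (k, l)) * descPochhammer F k
  have hpdeg : ∀ l, (p l).natDegree ≤ K - 1 := by
    intro l
    refine natDegree_sum_le_of_forall_le _ _ fun k _ => ?_
    refine (natDegree_C_mul_le _ _).trans ?_
    rw [descPochhammer_natDegree]; have := k.2; omega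
  have hpeval : ∀ (l : Fin L) (x : ℕ), (p l).eval (x : F) =
      ∑ k : Fin K, v (k, l) * (x.descFactorial k : F) := by
    intro l x
    simp only [p, eval_finsetSum, eval_mul, eval_C, descPochhammer_eval_eq_descFactorial]
  have hv' : ∀ r < R, ∀ s < S,
      ∑ l, (p l).eval ((r * n + s : ℕ) : F) * (θ r * y ^ s) ^ (l : ℕ) = 0 := by
    intro r hr s hs
    rw [← hv r hr s hs, Fintype.sum_prod_type_right]
    refine Finset.sum_congr rfl fun l _ => ?_
    rw [hpeval, Finset.sum_mul]
    exact Finset.sum_congr rfl fun k _ => by ring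
  -- it suffices to show that all the `p l` vanish
  have hmain : ∀ l, p l = 0 := by
    by_contra hne
    push Not at hne
    obtain ⟨l₀, hl₀⟩ := hne
    set J := Finset.univ.filter fun l => p l ≠ 0 with hJ
    set q := J.card with hq
    have hqL : q ≤ L := (Finset.card_le_univ J).trans (by simp)
    have hq0 : 0 < q := Finset.card_pos.2 ⟨l₀, by simp [hJ, hl₀]⟩
    let e : Fin q → Fin L := fun i => J.equivFin.symm i
    have he : Function.Injective e := Subtype.val_injective.comp J.equivFin.symm.injective
    have hpe : ∀ i, p (e i) ≠ 0 := fun i =>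
      (Finset.mem_filter.1 (J.equivFin.symm i).2).2
    have hyinj : Function.Injective fun j : Fin q => y ^ (e j : ℕ) := by
      intro i j hij
      exact he (Fin.ext (hy hij))
    have hdet := det_shift_ne_zero (fun j : Fin q => y ^ (e j : ℕ)) hyinj (fun j => p (e j)) hpe
    apply hdet
    set D := Matrix.of fun i j : Fin q => C ((y ^ (e j : ℕ)) ^ (i : ℕ)) *
      taylor ((i : ℕ) : F) (p (e j)) with hD
    have hsumJ : ∀ f : Fin L → F, (∀ l, p l = 0 → f l = 0) → ∑ l, f l = ∑ j, f (e j) := by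
      intro f hf
      have h1 : ∑ l, f l = ∑ l ∈ J, f l := by
        symm
        refine Finset.sum_subset (Finset.subset_univ J) fun l _ hl => hf l ?_
        by_contra h; exact hl (by simp [hJ, h])
      rw [h1, ← Finset.sum_coe_sort, ← Equiv.sum_comp J.equivFin.symm]
    have hroot : ∀ rs : Fin R × Fin (S - L),
        eval (((rs.1 : ℕ) * n + (rs.2 : ℕ) : ℕ) : F) D.det = 0 := by
      rintro ⟨⟨r, hr⟩, ⟨s, hs⟩⟩
      simp only
      rw [← coe_evalRingHom, RingHom.map_det]
      rw [← Matrix.exists_mulVec_eq_zero_iff]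
      refine ⟨fun j => (θ r * y ^ s) ^ (e j : ℕ), ?_, ?_⟩
      · intro h
        have := congrFun h ⟨0, hq0⟩
        exact pow_ne_zero _ (mul_ne_zero (hθ r hr) (pow_ne_zero _ hy0)) this
      · funext i
        have hsi : s + i < S := by have := i.2; omega
        have h1 := hv' r hr (s + i) hsi
        rw [hsumJ _ (fun l hl => by simp [hl])] at h1
        rw [Pi.zero_apply, ← h1]
        simp only [Matrix.mulVec, dotProduct, RingHom.mapMatrix_apply, Matrix.map_apply, hD,
          Matrix.of_apply, coe_evalRingHom, eval_mul, eval_C, taylor_eval]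
        refine Finset.sum_congr rfl fun j _ => ?_
        have : ((r * n + s : ℕ) : F) + (i : ℕ) = ((r * n + (s + i) : ℕ) : F) := by
          push_cast; ring
        rw [this, pow_add y s, ← mul_assoc (θ r), mul_pow (θ r * y ^ s), ← pow_mul, ← pow_mul, mul_comm (e j : ℕ)]
        ring
    refine eq_zero_of_natDegree_lt_card_of_eval_eq_zero D.det (f := fun rs : Fin R × Fin (S - L) => (((rs.1 : ℕ) * n + (rs.2 : ℕ) : ℕ) : F)) ?_ hroot ?_
    · rintro ⟨⟨r, hr⟩, ⟨s, hs⟩⟩ ⟨⟨r', hr'⟩, ⟨s', hs'⟩⟩ h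
      simp only [Nat.cast_inj] at h
      have hsn : s < n := by omega
      have hsn' : s' < n := by omega
      have hn : 0 < n := by omega
      have h1 : r = r' := by
        have := congrArg (· / n) h
        simpa [Nat.add_comm, Nat.add_mul_div_right _ _ hn, Nat.div_eq_of_lt hsn,
          Nat.div_eq_of_lt hsn'] using this
      subst h1
      have : s = s' := by omega
      subst this; rfl
    · have hdeg : D.det.natDegree ≤ q * (K - 1) := by
        rw [Matrix.det_apply]
        refine natDegree_sum_le_of_forall_le _ _ fun σ _ => ?_
        rw [Units.smul_def, zsmul_eq_mul]
        refine natDegree_mul_le.trans ?_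
        rw [natDegree_intCast, zero_add]
        refine (natDegree_prod_le _ _).trans ?_
        refine (Finset.sum_le_card_nsmul _ _ (K - 1) fun i _ => ?_).trans (by simp)
        rw [hD, Matrix.of_apply]
        refine (natDegree_C_mul_le _ _).trans ?_
        rw [natDegree_taylor]; exact hpdeg _
      rw [Fintype.card_prod, Fintype.card_fin, Fintype.card_fin]
      refine lt_of_le_of_lt hdeg (lt_of_lt_of_le ?_ hpts)
      calc q * (K - 1) < q * K := Nat.mul_lt_mul_of_pos_left (by omega) hq0
        _ ≤ L * K := Nat.mul_le_mul_right _ hqL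
  -- the falling factorials have distinct degrees, hence are independent
  have hindep : LinearIndependent F fun k : Fin K => descPochhammer F (k : ℕ) := by
    let seq : Polynomial.Sequence F :=
      { elems' := fun k => descPochhammer F k
        degree_eq' := fun k => by
          rw [degree_eq_natDegree (monic_descPochhammer F k).ne_zero, descPochhammer_natDegree] }
    have hall : LinearIndependent F seq :=
      seq.linearIndependent
    exact hall.comp _ Fin.val_injective
  funext ⟨k, l⟩
  have h1 := Fintype.linearIndependent_iff.1 hindep (fun k => v (k, l)) (by
    have := hmain l
    simpa [p, smul_eq_C_mul] using this) k
  exact h1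

end

/-! ### The arithmetic inequality -/

open NumberField in
/-- Liouville inequality for a nonzero element of `P ^ M` in a field of degree at most `4`. -/
theorem two_pow_le_of_mem_pow {F : Type*} [Field F] [NumberField F] (hdeg : Module.finrank ℚ F ≤ 4)
    (P : Ideal (𝓞 F)) (hP : P.IsPrime) (hP0 : P ≠ ⊥) (M B : ℕ) (hB : 1 ≤ B) (x : 𝓞 F) (hx0 : x ≠ 0)
    (hx : x ∈ P ^ M) (hσ : ∀ σ : F →ₐ[ℚ] ℂ, ‖σ (x : F)‖ ≤ B) : 2 ^ M ≤ B ^ 4 := by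
  have h2 : 2 ≤ Ideal.absNorm P := by
    have h0 : Ideal.absNorm P ≠ 0 := by
      rw [Ne, Ideal.absNorm_eq_zero_iff]; exact hP0
    have h1 : Ideal.absNorm P ≠ 1 := by
      rw [Ne, Ideal.absNorm_eq_one_iff]; exact hP.ne_top
    omega
  have hdvd : Ideal.absNorm P ^ M ∣ (Algebra.norm ℤ x).natAbs := by
    rw [← map_pow, ← Ideal.absNorm_span_singleton]
    exact Ideal.absNorm_dvd_absNorm_of_le ((Ideal.span_singleton_le_iff_mem _).2 hx)
  have hne : (Algebra.norm ℤ x).natAbs ≠ 0 := by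
    rw [Int.natAbs_ne_zero]; exact Algebra.norm_ne_zero_iff.2 hx0
  have hle : (Algebra.norm ℤ x).natAbs ≤ B ^ 4 := by
    have h3 : (((Algebra.norm ℤ x).natAbs : ℕ) : ℝ) = ‖((Algebra.norm ℚ (x : F) : ℚ) : ℂ)‖ := by
      rw [← Algebra.coe_norm_int, Nat.cast_natAbs]
      simp
    have h4 := Algebra.norm_eq_prod_embeddings ℚ ℂ (x : F)
    rw [eq_ratCast] at h4
    have h5 : (((Algebra.norm ℤ x).natAbs : ℕ) : ℝ) ≤ (B : ℝ) ^ 4 := by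
      rw [h3, h4, norm_prod]
      calc ∏ σ : F →ₐ[ℚ] ℂ, ‖σ (x : F)‖ ≤ ∏ _σ : F →ₐ[ℚ] ℂ, (B : ℝ) :=
            Finset.prod_le_prod (fun _ _ => norm_nonneg _) fun σ _ => hσ σ
        _ = (B : ℝ) ^ Module.finrank ℚ F := by
            rw [Finset.prod_const, Finset.card_univ, AlgHom.card]
        _ ≤ (B : ℝ) ^ 4 := pow_le_pow_right₀ (by exact_mod_cast hB) hdeg
    exact_mod_cast h5
  calc 2 ^ M ≤ Ideal.absNorm P ^ M := Nat.pow_le_pow_left h2 M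
    _ ≤ _ := Nat.le_of_dvd (Nat.pos_of_ne_zero hne) hdvd
    _ ≤ _ := hle

open NumberField in
/-- If `q α ^ n ≡ g mod P ^ T`, with `α ^ w ≡ 1 mod P` and `α` not a root of unity, then the
nonzero interpolation determinant of size `K L` is at once divisible by a high power of `P` and has
conjugates of bounded size. -/
theorem interpolation_inequality {F : Type*} [Field F] [NumberField F]
    (hdeg : Module.finrank ℚ F ≤ 4) (P : Ideal (𝓞 F)) (hP : P.IsPrime) (hP0 : P ≠ ⊥)
    (α g : 𝓞 F) (q n w K L R S T Q A G : ℕ)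
    (hα : Function.Injective fun i : ℕ => α ^ i) (hα0 : α ≠ 0) (hg : g ≠ 0) (hq : q ≠ 0)
    (hw0 : 1 ≤ w) (hcong : (q : 𝓞 F) * α ^ n - g ∈ P ^ T) (hw : α ^ w - 1 ∈ P)
    (hK : 1 ≤ K) (hL : 1 ≤ L) (hS : S ≤ n) (hpts : L * K ≤ R * (S - L)) (hQ : T + K ≤ Q)
    (hA1 : 1 ≤ A) (hqG : q ≤ G)
    (hA : ∀ σ : F →ₐ[ℚ] ℂ, ‖σ (α : F)‖ ≤ A) (hG : ∀ σ : F →ₐ[ℚ] ℂ, ‖σ (g : F)‖ ≤ G) :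
    2 ^ (T * (K * L - Q)) ≤
      ((K * L).factorial * ((R * n) ^ K * (G ^ R * A ^ S) ^ (w * L)) ^ (K * L)) ^ 4 := by
  classical
  have hG1 : 1 ≤ G := by omega
  -- The matrix of values of the functions at the grid points. Entries are scaled by
  -- `q ^ (R w l)`, to clear the denominators of `(g / q) ^ (r w l)`.
  let ent : Fin K × Fin L → ℕ → ℕ → 𝓞 F := fun kl r s =>
    ((r * n + s).descFactorial kl.1 : 𝓞 F) *
      ((g ^ r * (q : 𝓞 F) ^ (R - r)) ^ w * (α ^ w) ^ s) ^ (kl.2 : ℕ)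
  let M : Matrix (Fin K × Fin L) (Fin R × Fin S) F := fun kl rs =>
    ((ent kl rs.1 rs.2 : 𝓞 F) : F)
  have hαF : Function.Injective fun i : ℕ => ((α : F) ^ w) ^ i := by
    intro i j hij
    simp only [← pow_mul] at hij
    have h1 : α ^ (w * i) = α ^ (w * j) := by
      apply RingOfIntegers.coe_injective
      simpa using hij
    exact Nat.eq_of_mul_eq_mul_left (by omega) (hα h1)
  have hαF0 : (α : F) ≠ 0 := by simpa using hα0
  have hgF0 : (g : F) ≠ 0 := by simpa using hg
  have hqF0 : (q : F) ≠ 0 := by exact_mod_cast hq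
  have hker : ∀ v, Matrix.vecMul v M = 0 → v = 0 := by
    intro v hv
    refine grid_zero_estimate ((α : F) ^ w) (pow_ne_zero _ hαF0) hαF n K L R S
      (fun r => ((g : F) ^ r * (q : F) ^ (R - r)) ^ w) (fun r _ => by positivity) hK hS hpts v ?_
    intro r hr s hs
    have := congrFun hv (⟨r, hr⟩, ⟨s, hs⟩)
    simpa [Matrix.vecMul, dotProduct, M, ent] using this
  obtain ⟨f, hf⟩ := exists_det_ne_zero M hker
  let N : Matrix (Fin K × Fin L) (Fin K × Fin L) (𝓞 F) := fun kl j => ent kl (f j).1 (f j).2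
  have hN : ((N.det : 𝓞 F) : F) = (M.submatrix id f).det := by
    rw [show ((N.det : 𝓞 F) : F) = algebraMap (𝓞 F) F N.det from rfl, RingHom.map_det]
    rfl
  have hN0 : N.det ≠ 0 := by
    intro h0; apply hf; rw [← hN, h0]; simp
  have hRpos : 0 < R * n := by
    have hx : Fin K × Fin L := (⟨0, hK⟩, ⟨0, hL⟩)
    have h1 := (f hx).1.2
    have h2 := (f hx).2.2
    exact Nat.mul_pos (by omega) (by omega)
  have hxlt : ∀ j, ((f j).1 : ℕ) * n + (f j).2 < R * n := by
    intro j
    have h1 := (f j).1.2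
    have h2 := (f j).2.2
    calc ((f j).1 : ℕ) * n + (f j).2 < (f j).1 * n + n := by omega
      _ = ((f j).1 + 1) * n := by ring
      _ ≤ R * n := Nat.mul_le_mul_right _ (by omega)
  -- divisibility of the determinant
  have hmem : N.det ∈ P ^ (T * (K * L - Q)) := by
    let B := R * n
    let η : Fin K × Fin L → 𝓞 F := fun kl => (α ^ w) ^ (kl.2 : ℕ) - 1
    have hη : ∀ kl, η kl ∈ P := by
      intro kl
      have : α ^ w - 1 ∣ (α ^ w) ^ (kl.2 : ℕ) - 1 := by
        simpa using sub_dvd_pow_sub_pow (α ^ w) 1 (kl.2 : ℕ)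
      exact Ideal.mem_of_dvd _ this hw
    let co : Fin K × Fin L → ℕ → 𝓞 F := fun kl i =>
      ((q : 𝓞 F) ^ (R * w)) ^ (kl.2 : ℕ) *
      ((kl.1 : ℕ).factorial * (1 + η kl) ^ (kl.1 : ℕ) * (i.choose kl.1) * η kl ^ (i - kl.1))
    have hco : ∀ kl i, Q ≤ i → co kl i ∈ P ^ T := by
      intro kl i hi
      have h1 := kl.1.2
      refine Ideal.mul_mem_left _ _ (Ideal.mul_mem_left _ _ ?_)
      exact Ideal.pow_le_pow_right (by omega) (Ideal.pow_mem_pow (hη kl) _)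
    let an : Fin K × Fin L → Fin K × Fin L → 𝓞 F := fun kl j =>
      ((q : 𝓞 F) ^ (R * w)) ^ (kl.2 : ℕ) *
        ((((f j).1 * n + (f j).2 : ℕ).descFactorial kl.1 : 𝓞 F) *
          (1 + η kl) ^ (((f j).1 : ℕ) * n + (f j).2))
    have han : ∀ kl j, an kl j = ∑ i ∈ Finset.range (Q + B), co kl i *
        ((((f j).1 : ℕ) * n + (f j).2).choose i : 𝓞 F) := by
      intro kl j
      simp only [an]
      rw [descFactorial_mul_pow (η kl) kl.1 _ (Q + B) (by have := hxlt j; omega), Finset.mul_sum]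
      exact Finset.sum_congr rfl fun i _ => by simp only [co]; ring
    -- modulo `P ^ T`, replacing `g` by `q α ^ n` turns the entries into values of analytic functions
    have hdiff : ∀ kl j, N kl j - an kl j ∈ P ^ T := by
      intro kl j
      rw [← Ideal.Quotient.mk_eq_mk_iff_sub_mem]
      have hg' : Ideal.Quotient.mk (P ^ T) g = Ideal.Quotient.mk (P ^ T) ((q : 𝓞 F) * α ^ n) := by
        symm; rwa [Ideal.Quotient.mk_eq_mk_iff_sub_mem]
      simp only [N, ent, an, η]
      rw [map_mul, map_pow, map_mul, map_pow, map_mul, map_pow, hg']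
      simp only [← map_pow, ← map_mul]
      congr 1
      have hr := (f j).1.2
      generalize ((f j).1 : ℕ) = r at *
      generalize ((f j).2 : ℕ) = s at *
      obtain ⟨z, hz⟩ := Nat.exists_eq_add_of_lt hr
      have hz' : R - r = z + 1 := by omega
      have hqR : (q : 𝓞 F) ^ (R * w) = (q : 𝓞 F) ^ ((r + z + 1) * w) := by rw [← hz]
      rw [hz', hqR]
      ring
    have hrep := det_mem_pow_of_low_rank P T Q N (fun kl t => co kl t)
      (fun t j => ((((f j).1 : ℕ) * n + (f j).2).choose t : 𝓞 F))
      (fun kl j => N kl j - ∑ t : Fin Q, co kl t *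
        ((((f j).1 : ℕ) * n + (f j).2).choose t : 𝓞 F)) ?_ (fun kl j => by ring)
    · simpa [Fintype.card_prod] using hrep
    · intro kl j
      have h1 := han kl j
      rw [Finset.sum_range_add, Finset.sum_range] at h1
      have h2 : N kl j - ∑ t : Fin Q, co kl t * ((((f j).1 : ℕ) * n + (f j).2).choose t : 𝓞 F) =
          (N kl j - an kl j) + ∑ x ∈ Finset.range B, co kl (Q + x) *
            ((((f j).1 : ℕ) * n + (f j).2).choose (Q + x) : 𝓞 F) := by
        rw [h1]; ring
      rw [h2]
      refine Ideal.add_mem _ (hdiff kl j) (Ideal.sum_mem _ fun x _ => ?_)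
      exact Ideal.mul_mem_right _ _ (hco kl _ (by omega))
  refine two_pow_le_of_mem_pow hdeg P hP hP0 _ _ ?_ N.det hN0 hmem ?_
  · have := Nat.factorial_pos (K * L)
    have : 0 < ((R * n) ^ K * (G ^ R * A ^ S) ^ (w * L)) ^ (K * L) := by positivity
    exact Nat.one_le_iff_ne_zero.2 (by positivity)
  · intro σ
    have h1 : σ ((N.det : 𝓞 F) : F) =
        (((σ : F →+* ℂ).comp (algebraMap (𝓞 F) F)).mapMatrix N).det := by
      rw [← RingHom.map_det]; rfl
    rw [h1]
    have h2 := Matrix.det_le (A := ((σ : F →+* ℂ).comp (algebraMap (𝓞 F) F)).mapMatrix N)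
      (abv := NormedField.toAbsoluteValue ℂ)
      (x := (((R * n) ^ K * (G ^ R * A ^ S) ^ (w * L) : ℕ) : ℝ)) ?_
    · rw [nsmul_eq_mul] at h2
      refine le_trans (le_of_eq rfl) (h2.trans (le_of_eq ?_))
      simp [Fintype.card_prod]
    · intro kl j
      have hr := (f j).1.2
      have hs := (f j).2.2
      have hx := hxlt j
      have hk := kl.1.2
      have hl := kl.2.2
      change ‖σ ((ent kl (f j).1 (f j).2 : 𝓞 F) : F)‖ ≤ _
      simp only [ent]
      generalize ((f j).1 : ℕ) = r at *
      generalize ((f j).2 : ℕ) = s at *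
      generalize (kl.1 : ℕ) = k at *
      generalize (kl.2 : ℕ) = l at *
      push_cast
      simp only [map_mul, map_pow, map_natCast, norm_mul, norm_pow]
      rw [Complex.norm_natCast, Complex.norm_natCast]
      have hG1' : (1 : ℝ) ≤ G := by exact_mod_cast hG1
      have hA1' : (1 : ℝ) ≤ A := by exact_mod_cast hA1
      have hR1' : (1 : ℝ) ≤ (R : ℝ) * n := by exact_mod_cast hRpos
      gcongr
      · calc ((r * n + s).descFactorial k : ℝ) ≤ ((R * n : ℕ) : ℝ) ^ k := by
              exact_mod_cast (Nat.descFactorial_le_pow _ k).trans (Nat.pow_le_pow_left hx.le k)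
          _ ≤ ((R : ℝ) * n) ^ K := by
              push_cast
              exact pow_le_pow_right₀ hR1' hk.le
      · have e1 : ‖σ (g : F)‖ ^ r * (q : ℝ) ^ (R - r) ≤ (G : ℝ) ^ R := by
          calc ‖σ (g : F)‖ ^ r * (q : ℝ) ^ (R - r) ≤ (G : ℝ) ^ r * (G : ℝ) ^ (R - r) := by
                gcongr
                exact hG σ
            _ = (G : ℝ) ^ R := by rw [← pow_add]; congr 1; omega
        have e2 : ‖σ (α : F)‖ ^ s ≤ (A : ℝ) ^ S := by
          calc ‖σ (α : F)‖ ^ s ≤ (A : ℝ) ^ s := by gcongr; exact hA σ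
            _ ≤ (A : ℝ) ^ S := pow_le_pow_right₀ hA1' hs.le
        calc ((‖σ (g : F)‖ ^ r * (q : ℝ) ^ (R - r)) ^ w * (‖σ (α : F)‖ ^ w) ^ s) ^ l
            = ((‖σ (g : F)‖ ^ r * (q : ℝ) ^ (R - r)) * ‖σ (α : F)‖ ^ s) ^ (w * l) := by
              rw [← pow_mul, mul_comm w s, pow_mul, ← mul_pow, ← pow_mul]
          _ ≤ ((G : ℝ) ^ R * (A : ℝ) ^ S) ^ (w * l) := by gcongr
          _ ≤ _ := by
              refine pow_le_pow_right₀ ?_ (Nat.mul_le_mul_left _ hl.le)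
              exact one_le_mul_of_one_le_of_one_le (one_le_pow₀ hG1') (one_le_pow₀ hA1')

/-! ### Sizes and congruences of Pell solutions -/

/-- The sequence `X n` satisfies the Chebyshev recurrence; `x` extends it to `n = 0`. -/
theorem exists_pell_recurrence (d : ℕ) (hdns : ¬ IsSquare d) (X Y : ℕ → ℕ)
    (hpell : (X 1 : ℤ) ^ 2 - (d : ℤ) * (Y 1 : ℤ) ^ 2 = 1)
    (hXY : ∀ n : ℕ, 1 ≤ n → (X n : ℝ) + (Y n : ℝ) * Real.sqrt d =
        ((X 1 : ℝ) + (Y 1 : ℝ) * Real.sqrt d) ^ n) :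
    ∃ x : ℕ → ℤ, x 0 = 1 ∧ x 1 = X 1 ∧ (∀ n, x (n + 2) = 2 * X 1 * x (n + 1) - x n) ∧
      ∀ n, 1 ≤ n → x n = X n := by
  let z : ℤ√(d : ℤ) := ⟨X 1, Y 1⟩
  have hz2 : z ^ 2 = 2 * (X 1 : ℤ√(d : ℤ)) * z - 1 := by
    ext
    · simp [z, pow_two]; linear_combination -hpell
    · simp [z, pow_two]; ring
  have hinj := Zsqrtd.toReal_injective (d := (d : ℤ)) (by positivity) (by
    intro n hn
    apply hdns
    refine ⟨n.natAbs, ?_⟩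
    zify
    rw [abs_mul_abs_self]; exact hn)
  have hreal : ∀ u v : ℤ, Zsqrtd.toReal (d := (d : ℤ)) (by positivity) ⟨u, v⟩ =
      (u : ℝ) + v * Real.sqrt d := by
    intro u v
    simp [Zsqrtd.toReal, Zsqrtd.lift]
  refine ⟨fun n => (z ^ n).re, by simp, by simp [z], ?_, ?_⟩
  · intro n
    have : z ^ (n + 2) = 2 * (X 1 : ℤ√(d : ℤ)) * z ^ (n + 1) - z ^ n := by
      rw [pow_add, hz2]; ring
    simp only [this]
    simp
  · intro n hn
    have h1 : z ^ n = ⟨X n, Y n⟩ := by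
      apply hinj
      rw [map_pow, hreal, hreal]
      have := hXY n hn
      push_cast
      exact this.symm
    simp only [h1]

theorem pell_growth (A : ℤ) (hA : 1 ≤ A) (x : ℕ → ℤ) (h0 : x 0 = 1) (h1 : x 1 = A)
    (hrec : ∀ n, x (n + 2) = 2 * A * x (n + 1) - x n) (n : ℕ) :
    A ^ n ≤ x n ∧ x n ≤ (2 * A) ^ n := by
  have key : ∀ n, 1 ≤ x n ∧ A * x n ≤ x (n + 1) ∧ x (n + 1) ≤ 2 * A * x n := by
    intro n
    induction n with
    | zero => rw [h0, h1]; refine ⟨le_rfl, ?_, ?_⟩ <;> linarith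
    | succ k ih =>
      obtain ⟨i1, i2, i3⟩ := ih
      have h3 : x k ≤ A * x k := by nlinarith
      have h4 : x (k + 1) ≤ A * x (k + 1) := by nlinarith
      refine ⟨by linarith, ?_, ?_⟩ <;> rw [hrec] <;> nlinarith
  induction n with
  | zero => simp [h0]
  | succ k ih =>
    obtain ⟨i1, i2, i3⟩ := key k
    constructor
    · rw [pow_succ]
      calc (A : ℤ) ^ k * A ≤ x k * A := mul_le_mul_of_nonneg_right ih.1 (by linarith)
        _ ≤ x (k + 1) := by linarith
    · rw [pow_succ]
      calc x (k + 1) ≤ x k * (2 * A) := by linarith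
        _ ≤ (2 * A) ^ k * (2 * A) := mul_le_mul_of_nonneg_right ih.2 (by linarith)

theorem pell_congruence (A : ℤ) (x : ℕ → ℤ) (h0 : x 0 = 1) (h1 : x 1 = A)
    (hrec : ∀ n, x (n + 2) = 2 * A * x (n + 1) - x n) (k : ℕ) :
    (∃ t, x (2 * k) = (-1) ^ k + A ^ 2 * t) ∧
      ∃ t, x (2 * k + 1) = (-1) ^ k * ((2 * k + 1 : ℕ) : ℤ) * A + A ^ 3 * t := by
  induction k with
  | zero => exact ⟨⟨0, by simp [h0]⟩, ⟨0, by simp [h1]⟩⟩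
  | succ k ih =>
    obtain ⟨⟨t, ht⟩, ⟨t', ht'⟩⟩ := ih
    have e1 : x (2 * (k + 1)) = (-1) ^ (k + 1) +
        A ^ 2 * (2 * ((-1) ^ k * (2 * k + 1 : ℕ)) + 2 * A ^ 2 * t' - t) := by
      rw [show 2 * (k + 1) = 2 * k + 2 by ring, hrec, ht, ht']; ring
    refine ⟨⟨_, e1⟩, ⟨2 * (2 * ((-1) ^ k * (2 * k + 1 : ℕ)) + 2 * A ^ 2 * t' - t) - t', ?_⟩⟩
    rw [show 2 * (k + 1) + 1 = 2 * k + 1 + 2 by ring, hrec,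
      show 2 * k + 1 + 1 = 2 * (k + 1) by ring, e1, ht']
    push_cast; ring

theorem exists_one_add_pow (y : ℤ) (l : ℕ) :
    ∃ z, (1 + y) ^ l = 1 + l * y + (l.choose 2 : ℕ) * y ^ 2 + y ^ 3 * z := by
  induction l with
  | zero => exact ⟨0, by simp⟩
  | succ l ih =>
    obtain ⟨z, hz⟩ := ih
    refine ⟨z + z * y + (l.choose 2 : ℕ), ?_⟩
    rw [pow_succ, hz, Nat.choose_succ_succ' l 1]
    push_cast [Nat.choose_one_right]
    ring

set_option maxHeartbeats 1000000 in
/-- Consequences of the two representations. The bound `b ^ (m - 4) ≤ n ^ 2` comes from comparing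
them modulo `r ^ 2` and `r ^ 3`: if `r` is large, the first congruence is the equality
`c l = ± n a`, and the second says that `r` divides `c q l (l - 1) / 2`. -/
theorem size_and_lower_bound (b q a c m l n r : ℕ) (A : ℕ) (x : ℕ → ℤ) (hbq : b = q + 1)
    (hq : 1 ≤ q) (hr : b ^ m = q * r + 1) (hA : A = a * r) (ha : 1 ≤ a) (ha2 : a ≤ q ^ 2)
    (hm : 100 ≤ m) (h0 : x 0 = 1) (h1 : x 1 = A)
    (hrec : ∀ n, x (n + 2) = 2 * A * x (n + 1) - x n)
    (hn : 1 < n) (hodd : Odd n) (hc : 1 ≤ c) (hcq : c ≤ q) (hl : 1 ≤ l)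
    (hrep : (q : ℤ) * x n = c * ((b : ℤ) ^ (m * l) - 1)) :
    2 * A + 1 ≤ b ^ (m + 2) ∧ (m - 1) * n < m * l ∧ b ^ (m - 4) ≤ n ^ 2 ∧ 2 ≤ A := by
  have hb2 : 2 ≤ b := by omega
  have hn3 : 3 ≤ n := by obtain ⟨k, hk⟩ := hodd; omega
  have hm1 : b ^ m = b ^ (m - 1) * b := by rw [← pow_succ]; congr 1; omega
  have hrlow : b ^ (m - 1) ≤ r := by
    have hpos : 1 ≤ b ^ (m - 1) := Nat.one_le_pow _ _ (by omega)
    by_contra hlt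
    push Not at hlt
    have h1 : q * (r + 1) ≤ q * b ^ (m - 1) := Nat.mul_le_mul_left _ hlt
    have h2 : b ^ (m - 1) * b = q * b ^ (m - 1) + b ^ (m - 1) := by rw [hbq]; ring
    rw [hm1, h2] at hr
    have h3 : 2 ≤ b ^ (m - 1) := by
      calc 2 ≤ b := hb2
        _ = b ^ 1 := (pow_one b).symm
        _ ≤ b ^ (m - 1) := Nat.pow_le_pow_right (by omega) (by omega)
    rw [mul_add] at h1
    omega
  have hAlow : b ^ (m - 1) ≤ A := by
    rw [hA]; exact hrlow.trans (Nat.le_mul_of_pos_left r ha)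
  have hAup : A < b ^ (m + 1) := by
    have h1 : A ≤ q * (q * r) := by
      rw [hA, ← mul_assoc]; exact Nat.mul_le_mul_right _ (by rw [← pow_two]; exact ha2)
    have h2 : q * (q * r) < q * b ^ m := Nat.mul_lt_mul_of_pos_left (by omega) hq
    calc A < q * b ^ m := by omega
      _ ≤ b ^ (m + 1) := by rw [pow_succ, mul_comm]; exact Nat.mul_le_mul_left _ (by omega)
  have hA2 : 2 * A + 1 ≤ b ^ (m + 2) := by
    have : b ^ (m + 2) = b ^ (m + 1) * b := pow_succ _ _
    have h2 : b ^ (m + 1) * 2 ≤ b ^ (m + 1) * b := Nat.mul_le_mul_left _ hb2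
    omega
  have hAbig : 2 ≤ A := by
    calc 2 ≤ b := hb2
        _ = b ^ 1 := (pow_one b).symm
        _ ≤ b ^ (m - 1) := Nat.pow_le_pow_right (by omega) (by omega)
        _ ≤ A := hAlow
  obtain ⟨g1, g2⟩ := pell_growth A (by exact_mod_cast (by omega : 1 ≤ A)) x h0 h1 hrec n
  -- comparison of sizes
  have hbml : (1 : ℤ) ≤ (b : ℤ) ^ (m * l) := by exact_mod_cast Nat.one_le_pow _ _ (by omega)
  have hq' : (1 : ℤ) ≤ q := by exact_mod_cast hq
  have hc' : (1 : ℤ) ≤ c := by exact_mod_cast hc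
  have hcq' : (c : ℤ) ≤ q := by exact_mod_cast hcq
  have hxup : x n < (b : ℤ) ^ (m * l) := by
    have e1 : (c : ℤ) * ((b : ℤ) ^ (m * l) - 1) ≤ q * ((b : ℤ) ^ (m * l) - 1) :=
      mul_le_mul_of_nonneg_right hcq' (by linarith)
    rw [← hrep] at e1
    have := le_of_mul_le_mul_left e1 (by linarith)
    linarith
  have hs1 : (m - 1) * n < m * l := by
    have h2 : b ^ ((m - 1) * n) < b ^ (m * l) := by
      zify
      rw [pow_mul]
      refine lt_of_le_of_lt ?_ hxup
      refine le_trans ?_ g1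
      exact pow_le_pow_left₀ (by positivity) (by exact_mod_cast hAlow) n
    exact (Nat.pow_lt_pow_iff_right (by omega)).1 h2
  have hml : 1 ≤ m * l := Nat.mul_pos (by omega) hl
  have hxlow : (b : ℤ) ^ (m * l - 1) ≤ x n := by
    have e1 : (b : ℤ) ^ (m * l) = (b : ℤ) ^ (m * l - 1) * (q + 1) := by
      rw [show ((q : ℤ) + 1) = b by rw [hbq]; push_cast; ring, ← pow_succ]; congr 1; omega
    have e2 : (1 : ℤ) ≤ (b : ℤ) ^ (m * l - 1) := by
      exact_mod_cast Nat.one_le_pow _ _ (by omega)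
    have e3 : (b : ℤ) ^ (m * l) - 1 ≤ q * x n := by
      rw [hrep]; exact le_mul_of_one_le_left (by linarith) hc'
    rw [e1] at e3
    by_contra hlt
    push Not at hlt
    have e4 := mul_le_mul_of_nonneg_left (Int.add_one_le_iff.2 hlt) (by linarith : (0 : ℤ) ≤ q)
    linarith
  have hs2 : m * l - 1 ≤ (m + 2) * n := by
    have h2 : b ^ (m * l - 1) ≤ b ^ ((m + 2) * n) := by
      zify
      rw [pow_mul]
      refine hxlow.trans (g2.trans ?_)
      exact pow_le_pow_left₀ (by positivity) (by exact_mod_cast (by omega : 2 * A ≤ b ^ (m + 2))) n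
    exact (Nat.pow_le_pow_iff_right (by omega)).1 h2
  have hl2n : l ≤ 2 * n := by
    by_contra hlt
    push Not at hlt
    have h3 : m * (2 * n + 1) ≤ m * l := Nat.mul_le_mul_left _ hlt
    have h4 : m * (2 * n + 1) = 2 * (m * n) + m := by ring
    have h5 : (m + 2) * n = m * n + 2 * n := by ring
    have h6 : 2 * n ≤ m * n := Nat.mul_le_mul_right _ (by omega)
    omega
  have hl2 : 2 ≤ l := by
    by_contra hlt
    have : l = 1 := by omega
    subst this
    have h3 : (m - 1) * 3 ≤ (m - 1) * n := Nat.mul_le_mul_left _ hn3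
    omega
  refine ⟨hA2, hs1, ?_, hAbig⟩
  -- congruences modulo powers of `r`
  have hfinal : r ≤ b ^ 3 * n ^ 2 := by
    obtain ⟨k, hk⟩ := hodd
    obtain ⟨-, t, ht⟩ := pell_congruence A x h0 h1 hrec k
    rw [← hk] at ht
    obtain ⟨z, hz⟩ := exists_one_add_pow ((q : ℤ) * r) l
    have hbm : (b : ℤ) ^ m = 1 + q * r := by rw [add_comm]; exact_mod_cast hr
    rw [pow_mul, hbm, hz, ht, hA] at hrep
    have hrpos : 1 ≤ r := (Nat.one_le_pow _ _ (by omega)).trans hrlow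
    have hr' : (1 : ℤ) ≤ r := by exact_mod_cast hrpos
    have hcore : (c : ℤ) * (l + (l.choose 2 : ℕ) * (q * r) + (q * r) ^ 2 * z) =
        (-1) ^ k * n * a + a ^ 3 * r ^ 2 * t := by
      have hne : (q : ℤ) * r ≠ 0 := by positivity
      apply mul_left_cancel₀ hne
      push_cast at hrep
      linear_combination -hrep
    by_cases hbig : r ≤ c * l + n * a
    · calc r ≤ c * l + n * a := hbig
        _ ≤ q * (2 * n) + n * q ^ 2 := by gcongr
        _ ≤ b ^ 3 * n ^ 2 := by
          have h7 : q * (2 * n) + n * q ^ 2 ≤ b ^ 2 * n := by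
            have : (q + 1) ^ 2 * n = q * (2 * n) + n * q ^ 2 + n := by ring
            rw [hbq]; omega
          have h8 : b ^ 2 * n ≤ b ^ 3 * n ^ 2 := by
            have : n ≤ n ^ 2 := Nat.le_self_pow (by norm_num) n
            have : b ^ 2 ≤ b ^ 3 := Nat.pow_le_pow_right (by omega) (by norm_num)
            gcongr
          omega
    · push Not at hbig
      have hbig' : (c : ℤ) * l + n * a < r := by exact_mod_cast hbig
      have hpos1 : (1 : ℤ) ≤ (c : ℤ) * l := by exact_mod_cast Nat.mul_pos hc hl
      have hpos2 : (1 : ℤ) ≤ (n : ℤ) * a := by exact_mod_cast Nat.mul_pos (by omega) ha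
      have hdvd : (r : ℤ) ∣ c * l - (-1) ^ k * n * a :=
        ⟨a ^ 3 * r * t - c * ((l.choose 2 : ℕ) * q + q ^ 2 * r * z), by linear_combination hcore⟩
      have heq : (c : ℤ) * l = (-1) ^ k * n * a := by
        have h9 := Int.eq_zero_of_abs_lt_dvd hdvd (by
          rcases neg_one_pow_eq_or ℤ k with h | h <;> rw [h, abs_lt] <;> constructor <;> linarith)
        linarith
      have hdvd2 : (r : ℤ) ∣ ((c * l.choose 2 * q : ℕ) : ℤ) := by
        refine ⟨a ^ 3 * t - c * (q ^ 2 * z), ?_⟩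
        have hne : (r : ℤ) ≠ 0 := by positivity
        apply mul_left_cancel₀ hne
        push_cast
        linear_combination hcore - heq
      have hch : 0 < l.choose 2 := Nat.choose_pos hl2
      have hle := Nat.le_of_dvd (by positivity) (Int.natCast_dvd_natCast.1 hdvd2)
      have hch2 : 2 * l.choose 2 ≤ l ^ 2 := by
        rw [Nat.choose_two_right]
        have := Nat.div_mul_le_self (l * (l - 1)) 2
        have : l * (l - 1) ≤ l * l := Nat.mul_le_mul_left _ (by omega)
        rw [pow_two]; omega
      have hch3 : l.choose 2 ≤ 2 * n ^ 2 := by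
        have h9 : l ^ 2 ≤ (2 * n) ^ 2 := Nat.pow_le_pow_left hl2n 2
        have h10 : (2 * n) ^ 2 = 4 * n ^ 2 := by ring
        omega
      calc r ≤ c * l.choose 2 * q := hle
        _ ≤ q * (2 * n ^ 2) * q := by gcongr
        _ = (q * q * 2) * n ^ 2 := by ring
        _ ≤ (b * b * b) * n ^ 2 := by gcongr <;> omega
        _ = b ^ 3 * n ^ 2 := by ring
  have h10 : b ^ 3 * b ^ (m - 4) = b ^ (m - 1) := by rw [← pow_add]; congr 1; omega
  have h11 : b ^ 3 * b ^ (m - 4) ≤ b ^ 3 * n ^ 2 := by rw [h10]; exact hrlow.trans hfinal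
  exact Nat.le_of_mul_le_mul_left h11 (by positivity)

/-! ### The number field and the prime ideal -/

theorem finrank_adjoin_le_two (z s t : ℂ) (hs : s ∈ Set.range (algebraMap ℤ ℂ))
    (ht : t ∈ Set.range (algebraMap ℤ ℂ)) (hz : z ^ 2 + s * z + t = 0) :
    IsIntegral ℤ z ∧ Module.finrank ℚ (IntermediateField.adjoin ℚ {z}) ≤ 2 := by
  obtain ⟨s, rfl⟩ := hs
  obtain ⟨t, rfl⟩ := ht
  have hzZ : IsIntegral ℤ z := by
    refine ⟨Polynomial.X ^ 2 + Polynomial.C s * Polynomial.X + Polynomial.C t, ?_, ?_⟩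
    · monicity!
    · simp only [Polynomial.eval₂_add, Polynomial.eval₂_mul, Polynomial.eval₂_pow,
        Polynomial.eval₂_X, Polynomial.eval₂_C]
      exact hz
  refine ⟨hzZ, ?_⟩
  have hzQ : IsIntegral ℚ z := hzZ.tower_top
  rw [IntermediateField.adjoin.finrank hzQ]
  set f : Polynomial ℚ := Polynomial.X ^ 2 + Polynomial.C (s : ℚ) * Polynomial.X + Polynomial.C (t : ℚ) with hf
  have hmon : f.Monic := by rw [hf]; monicity!
  have hdeg : f.natDegree = 2 := by rw [hf]; compute_degree!
  rw [← hdeg]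
  apply Polynomial.natDegree_le_of_dvd
  · apply minpoly.dvd
    simpa [hf] using hz
  · exact hmon.ne_zero

open NumberField in
/-- A number field of degree at most `4` containing `α = A + √(A ^ 2 - 1)` and a root `g` of
`g ^ 2 + 2 c g + q ^ 2`. -/
theorem exists_number_field (A q c : ℕ) (hA : 2 ≤ A) :
    ∃ (F : Type) (_ : Field F) (_ : NumberField F) (α g : 𝓞 F),
      Module.finrank ℚ F ≤ 4 ∧ (Function.Injective fun i : ℕ => α ^ i) ∧
      α ^ 2 = 2 * A * α - 1 ∧ g ^ 2 + 2 * c * g + q ^ 2 = 0 := by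
  set x : ℝ := A + Real.sqrt ((A : ℝ) ^ 2 - 1) with hx
  have hA' : (2 : ℝ) ≤ A := by exact_mod_cast hA
  have hx1 : 1 < x := by have := Real.sqrt_nonneg ((A : ℝ) ^ 2 - 1); linarith
  have hx2 : x ^ 2 = 2 * A * x - 1 := by
    have := Real.sq_sqrt (show (0 : ℝ) ≤ (A : ℝ) ^ 2 - 1 by nlinarith)
    rw [hx]; linear_combination this
  obtain ⟨y, hy⟩ : ∃ y : ℂ, y ^ 2 = (c : ℂ) ^ 2 - (q : ℂ) ^ 2 :=
    IsAlgClosed.exists_pow_nat_eq _ (by norm_num)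
  set w : ℂ := y - c with hw
  have hw2 : w ^ 2 + 2 * c * w + q ^ 2 = 0 := by rw [hw]; linear_combination hy
  have hx3 : (x : ℂ) ^ 2 = 2 * A * x - 1 := by exact_mod_cast hx2
  obtain ⟨i1, f1⟩ := finrank_adjoin_le_two (x : ℂ) (-2 * A) 1 ⟨-2 * A, by simp⟩ ⟨1, by simp⟩
    (by linear_combination hx3)
  obtain ⟨i2, f2⟩ := finrank_adjoin_le_two w (2 * c) (q ^ 2) ⟨2 * c, by simp⟩ ⟨q ^ 2, by simp⟩
    hw2
  set E1 := IntermediateField.adjoin ℚ {(x : ℂ)}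
  set E2 := IntermediateField.adjoin ℚ {w}
  have fd1 : FiniteDimensional ℚ E1 := IntermediateField.adjoin.finiteDimensional i1.tower_top
  have fd2 : FiniteDimensional ℚ E2 := IntermediateField.adjoin.finiteDimensional i2.tower_top
  set F := E1 ⊔ E2
  have hxF : (x : ℂ) ∈ F := (le_sup_left : E1 ≤ F) (IntermediateField.mem_adjoin_simple_self ℚ _)
  have hwF : w ∈ F := (le_sup_right : E2 ≤ F) (IntermediateField.mem_adjoin_simple_self ℚ _)
  have fdF : FiniteDimensional ℚ F := IntermediateField.finiteDimensional_sup E1 E2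
  have nf : NumberField F := { to_charZero := inferInstance, to_finiteDimensional := fdF }
  have j1 : IsIntegral ℤ (⟨x, hxF⟩ : F) :=
    (isIntegral_algHom_iff (F.val.restrictScalars ℤ) F.val.injective).1 i1
  have j2 : IsIntegral ℤ (⟨w, hwF⟩ : F) :=
    (isIntegral_algHom_iff (F.val.restrictScalars ℤ) F.val.injective).1 i2
  refine ⟨F, inferInstance, nf, ⟨⟨x, hxF⟩, j1⟩, ⟨⟨w, hwF⟩, j2⟩, ?_, ?_, ?_, ?_⟩
  · calc Module.finrank ℚ F ≤ Module.finrank ℚ E1 * Module.finrank ℚ E2 :=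
          IntermediateField.finrank_sup_le E1 E2
      _ ≤ 2 * 2 := Nat.mul_le_mul f1 f2
  · intro i j hij
    have h1 : (x : ℂ) ^ i = (x : ℂ) ^ j :=
      congrArg (fun z : 𝓞 F => ((z : F) : ℂ)) hij
    have h2 : x ^ i = x ^ j := by exact_mod_cast h1
    exact pow_right_injective₀ (by linarith) hx1.ne' h2
  · apply RingOfIntegers.ext
    apply Subtype.ext
    exact hx3
  · apply RingOfIntegers.ext
    apply Subtype.ext
    exact hw2

theorem pow_add_pow_eq {B : Type*} [CommRing B] (A : ℕ) (x : ℕ → ℤ) (h0 : x 0 = 1) (h1 : x 1 = A)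
    (hrec : ∀ n, x (n + 2) = 2 * A * x (n + 1) - x n) (α : B) (hα : α ^ 2 = 2 * A * α - 1)
    (n : ℕ) : α ^ n + (2 * A - α) ^ n = 2 * (x n : B) := by
  have key : ∀ n, α ^ n + (2 * A - α) ^ n = 2 * (x n : B) ∧
      α ^ (n + 1) + (2 * A - α) ^ (n + 1) = 2 * (x (n + 1) : B) := by
    intro n
    induction n with
    | zero => rw [zero_add, h0, h1]; push_cast; constructor <;> ring
    | succ k ih =>
      refine ⟨ih.2, ?_⟩
      rw [hrec]
      push_cast
      linear_combination (2 * A : B) * ih.2 - ih.1 + (α ^ k + (2 * A - α) ^ k) * hα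
  exact (key n).1

/-- In characteristic `p`, a root `α` of `z ^ 2 - 2 A z + 1` is mapped by Frobenius to `α` or to
`α⁻¹`, so `α ^ (p - 1) = 1` or `α ^ (p + 1) = 1`. -/
theorem pow_eq_one_of_quadratic {B : Type*} [CommRing B] [IsDomain B] (p A : ℕ)
    [Fact p.Prime] [CharP B p] (α : B) (hα : α ^ 2 = 2 * A * α - 1) :
    α ^ (p ^ 2 - 1) = 1 := by
  have hp : 2 ≤ p := (Fact.out : p.Prime).two_le
  have hα0 : α ≠ 0 := by
    rintro rfl
    simp at hα
  have hfr : (α ^ p) ^ 2 = 2 * A * α ^ p - 1 := by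
    have := congrArg (frobenius B p) hα
    simpa only [map_sub, map_mul, map_pow, map_natCast, map_one, map_ofNat, frobenius_def] using this
  have hfac : (α ^ p - α) * (α ^ p + α - 2 * A) = 0 := by
    linear_combination hfr - hα
  obtain ⟨k, rfl⟩ : ∃ k, p = k + 1 := ⟨p - 1, by omega⟩
  have he : (k + 1) ^ 2 - 1 = k * (k + 2) := by
    have : (k + 1) ^ 2 = k * (k + 2) + 1 := by ring
    omega
  rw [he]
  rcases mul_eq_zero.1 hfac with h | h
  · have : α ^ k = 1 := by
      apply mul_left_cancel₀ hα0
      linear_combination h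
    rw [pow_mul, this, one_pow]
  · have : α ^ (k + 2) = 1 := by linear_combination α * h - hα
    rw [mul_comm, pow_mul, this, one_pow]

theorem mem_pow_or_mem_pow {B : Type*} [CommRing B] [IsDedekindDomain B] (P : Ideal B)
    (hP : P.IsPrime) (hP0 : P ≠ ⊥) (y z : B) (V M : ℕ) (hVM : 2 * V ≤ M + 1)
    (h : y * z ∈ P ^ M) : y ∈ P ^ V ∨ z ∈ P ^ V := by
  have hprime : Prime P := Ideal.prime_of_isPrime hP0 hP
  rw [← Ideal.span_singleton_le_iff_mem, ← Ideal.dvd_iff_le] at h ⊢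
  rw [← Ideal.span_singleton_le_iff_mem, ← Ideal.dvd_iff_le (J := Ideal.span {z})]
  rw [← Ideal.span_singleton_mul_span_singleton] at h
  rw [pow_dvd_iff_le_emultiplicity, emultiplicity_mul hprime] at h
  rw [pow_dvd_iff_le_emultiplicity, pow_dvd_iff_le_emultiplicity]
  by_contra! hcon
  obtain ⟨h1, h2⟩ := hcon
  obtain ⟨e1, he1⟩ := ENat.ne_top_iff_exists.1 h1.ne_top
  obtain ⟨e2, he2⟩ := ENat.ne_top_iff_exists.1 h2.ne_top
  rw [← he1] at h1 h
  rw [← he2] at h2 h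
  norm_cast at h1 h2 h
  omega

open NumberField in
/-- The representation of `x n` makes `q α ^ n` highly congruent to a root `h` of
`h ^ 2 + 2 c h + q ^ 2` modulo a prime ideal `P` containing `b`. -/
theorem exists_prime_ideal {F : Type} [Field F] [NumberField F] (A b q c n M V : ℕ) (hbq : b = q + 1)
    (hq : 1 ≤ q) (x : ℕ → ℤ) (h0 : x 0 = 1) (h1 : x 1 = A)
    (hrec : ∀ n, x (n + 2) = 2 * A * x (n + 1) - x n)
    (hrep : (q : ℤ) * x n = c * ((b : ℤ) ^ M - 1)) (hV : 2 * V ≤ M)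
    (α g : 𝓞 F) (hα : α ^ 2 = 2 * A * α - 1) (hg : g ^ 2 + 2 * c * g + q ^ 2 = 0) :
    ∃ (P : Ideal (𝓞 F)) (w : ℕ) (h : 𝓞 F), P.IsPrime ∧ P ≠ ⊥ ∧ 1 ≤ w ∧ w ≤ b ^ 2 ∧
      α ^ w - 1 ∈ P ∧ h ^ 2 + 2 * c * h + q ^ 2 = 0 ∧ (q : 𝓞 F) * α ^ n - h ∈ P ^ V := by
  obtain ⟨p, hp, hpb⟩ := Nat.exists_prime_and_dvd (show b ≠ 1 by omega)
  have hple : p ≤ b := Nat.le_of_dvd (by omega) hpb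
  have : Fact p.Prime := ⟨hp⟩
  have hmax : (Ideal.span {(p : ℤ)}).IsMaximal :=
    PrincipalIdealRing.isMaximal_of_irreducible (Nat.prime_iff_prime_int.1 hp).irreducible
  obtain ⟨P, hPmax, hPover⟩ :=
    Ideal.exists_maximal_ideal_liesOver_of_isIntegral (S := 𝓞 F) (Ideal.span {(p : ℤ)})
  have hpP : (p : 𝓞 F) ∈ P := by
    have : (p : ℤ) ∈ P.under ℤ := by
      rw [← hPover.over]; exact Ideal.mem_span_singleton_self _
    simpa [Ideal.mem_comap] using this
  have hP0 : P ≠ ⊥ := by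
    rintro rfl
    rw [Ideal.mem_bot] at hpP
    exact hp.ne_zero (by exact_mod_cast hpP)
  have hbP : (b : 𝓞 F) ∈ P := by
    obtain ⟨k, rfl⟩ := hpb
    push_cast
    exact P.mul_mem_right _ hpP
  have hw : α ^ (p ^ 2 - 1) - 1 ∈ P := by
    have := hPmax.isPrime
    have : CharP (𝓞 F ⧸ P) p := by
      refine ringChar.of_eq (CharP.ringChar_of_prime_eq_zero hp ?_)
      rw [← map_natCast (Ideal.Quotient.mk P)]
      exact Ideal.Quotient.eq_zero_iff_mem.2 hpP
    rw [← Ideal.Quotient.eq_zero_iff_mem, map_sub, map_pow, map_one,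
      pow_eq_one_of_quadratic p A (Ideal.Quotient.mk P α), sub_self]
    have := congrArg (Ideal.Quotient.mk P) hα
    simpa only [map_sub, map_mul, map_pow, map_natCast, map_one, map_ofNat] using this
  have hp2 : 2 ^ 2 ≤ p ^ 2 := Nat.pow_le_pow_left hp.two_le 2
  have hpb2 : p ^ 2 ≤ b ^ 2 := Nat.pow_le_pow_left hple 2
  have hprod : ((q : 𝓞 F) * α ^ n - g) * ((q : 𝓞 F) * α ^ n - (-2 * c - g)) ∈ P ^ M := by
    have e1 := pow_add_pow_eq A x h0 h1 hrec α hα n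
    have e2 : α ^ n * (2 * A - α) ^ n = 1 := by
      rw [← mul_pow, show α * (2 * A - α) = 1 by linear_combination -hα, one_pow]
    have e3 : (q : 𝓞 F) * (x n : 𝓞 F) = c * ((b : 𝓞 F) ^ M - 1) := by exact_mod_cast congrArg (Int.cast (R := 𝓞 F)) hrep
    have e4 : ((q : 𝓞 F) * α ^ n - g) * ((q : 𝓞 F) * α ^ n - (-2 * c - g)) =
        (2 * q * c * α ^ n) * (b : 𝓞 F) ^ M := by
      linear_combination (-1 : 𝓞 F) * hg + (q : 𝓞 F) ^ 2 * α ^ n * e1 - (q : 𝓞 F) ^ 2 * e2 +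
        2 * q * α ^ n * e3
    rw [e4]
    exact Ideal.mul_mem_left _ _ (Ideal.pow_mem_pow hbP M)
  rcases mem_pow_or_mem_pow P hPmax.isPrime hP0 _ _ V M (by omega) hprod with h | h
  · exact ⟨P, p ^ 2 - 1, g, hPmax.isPrime, hP0, by omega, by omega, hw, hg, h⟩
  · exact ⟨P, p ^ 2 - 1, -2 * c - g, hPmax.isPrime, hP0, by omega, by omega, hw,
      by linear_combination hg, h⟩

open NumberField in
theorem norm_le_of_quadratic {F : Type} [Field F] [NumberField F] (α : 𝓞 F) (s t B : ℝ) (s' t' : ℤ)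
    (hs : |(s' : ℝ)| ≤ s) (ht : |(t' : ℝ)| ≤ t) (hB : 0 ≤ B) (hBst : s * B + t ≤ B ^ 2) (hsB : s ≤ B)
    (hα : α ^ 2 + s' * α + t' = 0) (σ : F →ₐ[ℚ] ℂ) : ‖σ (α : F)‖ ≤ B := by
  have h1 : (α : F) ^ 2 + s' * (α : F) + t' = 0 := by
    simpa only [map_add, map_mul, map_pow, map_intCast, map_zero] using
      congrArg (algebraMap (𝓞 F) F) hα
  have h2 := congrArg σ h1
  simp only [map_add, map_mul, map_pow, map_intCast, map_zero] at h2
  set z := σ (α : F)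
  have h3 : z ^ 2 = -(s' * z + t') := by linear_combination h2
  have h4 : ‖z‖ ^ 2 ≤ s * ‖z‖ + t := by
    rw [← norm_pow, h3, norm_neg]
    refine (norm_add_le _ _).trans ?_
    rw [norm_mul, Complex.norm_intCast, Complex.norm_intCast]
    gcongr
  by_contra! hlt
  have : 0 ≤ s := (abs_nonneg _).trans hs
  nlinarith [norm_nonneg z]

/-! ### Choice of parameters -/

/-- When `lam` is the number of binary digits of `n` and `b ^ 42 ≤ n`, the quantity
`b ^ 6 lam ^ 2` is at most about `n ^ (1 / 7) (log n) ^ 2`, with room for the factor `2 ^ 31`. -/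
theorem dominant_size (b n lam : ℕ) (hb : b ^ 42 ≤ n) (hlow : 2 ^ (lam - 1) ≤ n)
    (hup : n < 2 ^ lam) (hlam : 59 ≤ lam) : 2 ^ 31 * b ^ 6 * lam ^ 2 ≤ n := by
  have h1 : b ^ 6 < 2 ^ (lam / 7 + 1) := by
    have : (b ^ 6) ^ 7 < (2 ^ (lam / 7 + 1)) ^ 7 := by
      rw [← pow_mul, ← pow_mul]
      calc b ^ (6 * 7) ≤ n := hb
        _ < 2 ^ lam := hup
        _ ≤ 2 ^ ((lam / 7 + 1) * 7) := Nat.pow_le_pow_right (by norm_num) (by omega)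
    exact lt_of_pow_lt_pow_left₀ 7 (by positivity) this
  have h2 : ∀ k, 59 ≤ k → 2 ^ 33 * k ^ 2 ≤ 2 ^ (k - k / 7) := by
    have key : ∀ j r, r < 7 → 59 ≤ 7 * j + r → 2 ^ 33 * (7 * j + r) ^ 2 ≤ 2 ^ (6 * j + r) := by
      intro j r hr hj
      have hj8 : 8 ≤ j := by omega
      induction j, hj8 using Nat.le_induction with
      | base => interval_cases r <;> omega
      | succ j hj8 ih =>
        rcases Nat.lt_or_ge (7 * j + r) 59 with h | h
        · have : j = 8 := by omega
          subst this
          interval_cases r <;> norm_num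
        · have := ih h
          have e : 2 ^ (6 * (j + 1) + r) = 64 * 2 ^ (6 * j + r) := by
            rw [show 6 * (j + 1) + r = 6 * j + r + 6 by ring, pow_add]; ring
          rw [e]
          nlinarith
    intro k hk
    have := key (k / 7) (k % 7) (Nat.mod_lt _ (by norm_num)) (by omega)
    rw [show 7 * (k / 7) + k % 7 = k by omega] at this
    rwa [show k - k / 7 = 6 * (k / 7) + k % 7 by omega]
  have h3 := h2 lam hlam
  have h4 : 2 ^ (lam / 7 + 1) * 2 ^ (lam - lam / 7) = 4 * 2 ^ (lam - 1) := by
    rw [← pow_add, show lam / 7 + 1 + (lam - lam / 7) = 2 + (lam - 1) by omega, pow_add]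
    norm_num
  have h5 : b ^ 6 * (2 ^ 33 * lam ^ 2) ≤ 2 ^ (lam / 7 + 1) * 2 ^ (lam - lam / 7) :=
    Nat.mul_le_mul h1.le h3
  rw [h4] at h5
  have h6 : b ^ 6 * (2 ^ 33 * lam ^ 2) = 4 * (2 ^ 31 * b ^ 6 * lam ^ 2) := by ring
  omega

/-- With the chosen parameters, the inequality of `interpolation_inequality` fails: every factor of
the upper bound is a power of `2` with exponent a small multiple of `E = b R w L = lam K`. -/
theorem upper_lt_lower (b w m n lam S R K L N T : ℕ) (hb : 1 ≤ b) (hw : 1 ≤ w) (hlam : 1 ≤ lam)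
    (hR0 : 1 ≤ R) (hRn : R ≤ n) (hn : n < 2 ^ lam) (hRS : R = (m + 2) * S)
    (hK : K = 200 * b * w * R) (hL : L = 200 * lam) (hN : K * L = N) (hT : N = 4 * T) :
    (N.factorial * ((R * n) ^ K * ((b ^ 2) ^ R * (b ^ (m + 2)) ^ S) ^ (w * L)) ^ N) ^ 4 <
      2 ^ (T * (N - 2 * T)) := by
  set E := b * R * w * L with hE
  have hE1 : 1 ≤ b * R * w * lam := by
    have := Nat.mul_pos (Nat.mul_pos (Nat.mul_pos hb hR0) hw) hlam
    exact this
  have hKE : 200 * (lam * K) = 200 * E := by rw [hE, hK, hL]; ring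
  have hTE : T = 50 * E := by
    have : 4 * T = 4 * (50 * E) := by rw [← hT, ← hN, hE, hK, hL]; ring
    omega
  have hlK : lam * K = E := by omega
  have hE200 : 200 ≤ E := by
    have : E = 200 * (b * R * w * lam) := by rw [hE, hL]; ring
    omega
  have hN2 : N ≤ 2 ^ E := by
    have h1 : N = 200 * E := by rw [← hN, hL, ← hlK]; ring
    have h2 : ∀ t, 12 ≤ t → 200 * t ≤ 2 ^ t := by
      intro t ht
      induction t, ht using Nat.le_induction with
      | base => norm_num
      | succ t ht ih => rw [pow_succ]; omega
    rw [h1]; exact h2 E (by omega)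
  have hfac : N.factorial ≤ (2 ^ E) ^ N :=
    (Nat.factorial_le_pow N).trans (Nat.pow_le_pow_left hN2 N)
  have hRn2 : (R * n) ^ K ≤ 2 ^ (2 * E) := by
    calc (R * n) ^ K ≤ (2 ^ lam * 2 ^ lam) ^ K :=
          Nat.pow_le_pow_left (Nat.mul_le_mul (by omega) hn.le) K
      _ = 2 ^ (2 * E) := by rw [← pow_add, ← pow_mul, ← hlK]; congr 1; ring
  have hbR : ((b ^ 2) ^ R * (b ^ (m + 2)) ^ S) ^ (w * L) ≤ 2 ^ (3 * E) := by
    calc ((b ^ 2) ^ R * (b ^ (m + 2)) ^ S) ^ (w * L) = b ^ (3 * (R * w * L)) := by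
          rw [← pow_mul, ← pow_mul, ← hRS, ← pow_add, ← pow_mul]; congr 1; ring
      _ ≤ (2 ^ b) ^ (3 * (R * w * L)) := Nat.pow_le_pow_left Nat.lt_two_pow_self.le _
      _ = 2 ^ (3 * E) := by rw [← pow_mul, hE]; congr 1; ring
  calc (N.factorial * ((R * n) ^ K * ((b ^ 2) ^ R * (b ^ (m + 2)) ^ S) ^ (w * L)) ^ N) ^ 4
      ≤ ((2 ^ E) ^ N * (2 ^ (2 * E) * 2 ^ (3 * E)) ^ N) ^ 4 := by gcongr
    _ = 2 ^ (E * 6 * N * 4) := by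
        rw [← pow_add, ← pow_mul, ← pow_mul, ← pow_add, ← pow_mul]; congr 1; ring
    _ < 2 ^ (T * (N - 2 * T)) := by
        apply Nat.pow_lt_pow_right (by norm_num)
        rw [hT, hTE, show 4 * (50 * E) - 2 * (50 * E) = 100 * E by omega]
        nlinarith

/-! ### Conclusion -/

set_option maxHeartbeats 1000000 in
/-- The absolute bound `n < 2 ^ 58`, for the sequence `x` with `x 1 = A = a r`. -/
theorem lt_two_pow_of_representation (b q a c m l n r : ℕ) (A : ℕ) (x : ℕ → ℤ) (hbq : b = q + 1)
    (hq : 1 ≤ q) (hr : b ^ m = q * r + 1) (hA : A = a * r) (ha : 1 ≤ a) (ha2 : a ≤ q ^ 2)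
    (hm : 100 ≤ m) (h0 : x 0 = 1) (h1 : x 1 = A)
    (hrec : ∀ n, x (n + 2) = 2 * A * x (n + 1) - x n)
    (hn : 1 < n) (hodd : Odd n) (hc : 1 ≤ c) (hcq : c ≤ q) (hl : 1 ≤ l)
    (hrep : (q : ℤ) * x n = c * ((b : ℤ) ^ (m * l) - 1)) : n < 2 ^ 58 := by
  by_contra! hbig
  obtain ⟨hA2, hs1, hlow, hA'⟩ := size_and_lower_bound b q a c m l n r A x hbq hq hr hA ha ha2 hm
    h0 h1 hrec hn hodd hc hcq hl hrep
  have hb2 : 2 ≤ b := by omega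
  obtain ⟨lam, hlam⟩ : ∃ lam, lam = Nat.log 2 n + 1 := ⟨_, rfl⟩
  have hup : n < 2 ^ lam := by rw [hlam]; exact Nat.lt_pow_succ_log_self (by norm_num) n
  have hdown : 2 ^ (lam - 1) ≤ n := by
    rw [hlam]; exact Nat.pow_log_le_self 2 (by omega)
  have hlam59 : 59 ≤ lam := by
    have : 2 ^ 58 < 2 ^ lam := lt_of_le_of_lt hbig hup
    exact (Nat.pow_lt_pow_iff_right (by norm_num)).1 this
  have hb42 : b ^ 42 ≤ n := by
    have h2 : (b ^ 48) ^ 2 ≤ n ^ 2 := by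
      rw [← pow_mul]
      exact (Nat.pow_le_pow_right (by omega) (by omega)).trans hlow
    have h3 : b ^ 48 ≤ n := (Nat.pow_le_pow_iff_left (by norm_num)).1 h2
    exact (Nat.pow_le_pow_right (by omega) (by omega)).trans h3
  have hmlam : m + 2 ≤ 3 * lam := by
    have h2 : 2 ^ (m - 4) < 2 ^ (lam * 2) := by
      calc 2 ^ (m - 4) ≤ b ^ (m - 4) := Nat.pow_le_pow_left hb2 _
        _ ≤ n ^ 2 := hlow
        _ < (2 ^ lam) ^ 2 := Nat.pow_lt_pow_left hup (by norm_num)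
        _ = 2 ^ (lam * 2) := (pow_mul _ _ _).symm
    have := (Nat.pow_lt_pow_iff_right (by norm_num)).1 h2
    omega
  have hdom := dominant_size b n lam hb42 hdown hup hlam59
  obtain ⟨F, _, _, α, g₀, hdeg, hinj, hα, hg₀⟩ := exists_number_field A q c hA'
  have hexp : ∀ w, 1 ≤ w → w ≤ b ^ 2 → 2 ^ 31 * (b * w) ^ 2 * lam ^ 2 ≤ n := by
    intro w hw1 hw2
    refine le_trans ?_ hdom
    have : (b * w) ^ 2 ≤ (b * b ^ 2) ^ 2 := by gcongr
    have e : (b * b ^ 2) ^ 2 = b ^ 6 := by ring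
    rw [e] at this
    gcongr
  obtain ⟨P, w, g, hP, hP0, hw1, hw2, hwP, hg, hcong⟩ := exists_prime_ideal A b q c n (m * l)
    (m * l / 2) hbq hq x h0 h1 hrec hrep (by omega) α g₀ hα hg₀
  have hD := hexp w hw1 hw2
  obtain ⟨D, hDdef⟩ : ∃ D, D = b * w := ⟨_, rfl⟩
  have hD1 : 1 ≤ D := by rw [hDdef]; exact Nat.mul_pos (by omega) hw1
  obtain ⟨L, hL⟩ : ∃ L, L = 200 * lam := ⟨_, rfl⟩
  obtain ⟨S, hS⟩ : ∃ S, S = 201 * D * L := ⟨_, rfl⟩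
  obtain ⟨R, hR⟩ : ∃ R, R = (m + 2) * S := ⟨_, rfl⟩
  obtain ⟨K, hK⟩ : ∃ K, K = 200 * b * w * R := ⟨_, rfl⟩
  obtain ⟨T, hT⟩ : ∃ T, T = 50 * D * R * L := ⟨_, rfl⟩
  have hKL : K * L = 4 * T := by rw [hK, hT, hDdef]; ring
  rw [← hDdef] at hD
  have hS1 : 1 ≤ S := by
    rw [hS, hL]; exact Nat.mul_pos (Nat.mul_pos (by norm_num) hD1) (by omega)
  have hR1 : 1 ≤ R := by rw [hR]; exact Nat.mul_pos (by omega) hS1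
  have hK1 : 1 ≤ K := by
    rw [hK, mul_assoc 200, ← hDdef]; exact Nat.mul_pos (Nat.mul_pos (by norm_num) hD1) hR1
  have hDl : 1 ≤ D * lam := Nat.mul_pos hD1 (by omega)
  have hRn : R ≤ n := by
    have e1 : D * lam ^ 2 ≤ D ^ 2 * lam ^ 2 :=
      Nat.mul_le_mul_right _ (Nat.le_self_pow (by norm_num) D)
    calc R = (m + 2) * (40200 * (D * lam)) := by rw [hR, hS, hL]; ring
      _ ≤ (3 * lam) * (40200 * (D * lam)) := Nat.mul_le_mul_right _ hmlam
      _ = 120600 * (D * lam ^ 2) := by ring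
      _ ≤ 2 ^ 31 * D ^ 2 * lam ^ 2 := by rw [mul_assoc]; exact Nat.mul_le_mul (by norm_num) e1
      _ ≤ n := hD
  have hSR : S ≤ R := by rw [hR]; exact Nat.le_mul_of_pos_left _ (by omega)
  have hTV : T ≤ m * l / 2 := by
    have e1 : T = 402000000 * ((m + 2) * (D ^ 2 * lam ^ 2)) := by
      rw [hT, hR, hS, hL]; ring
    have e2 : (m - 1) * (2 ^ 31 * D ^ 2 * lam ^ 2) ≤ (m - 1) * n := Nat.mul_le_mul_left _ hD
    obtain ⟨k, rfl⟩ : ∃ k, m = k + 1 := ⟨m - 1, by omega⟩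
    rw [Nat.add_sub_cancel] at e2 hs1
    have e3 : k * (2 ^ 31 * D ^ 2 * lam ^ 2) = 2 ^ 31 * (k * (D ^ 2 * lam ^ 2)) := by ring
    have e4 : (k + 1 + 2) * (D ^ 2 * lam ^ 2) = k * (D ^ 2 * lam ^ 2) + 3 * (D ^ 2 * lam ^ 2) := by
      ring
    have e5 : 99 * (D ^ 2 * lam ^ 2) ≤ k * (D ^ 2 * lam ^ 2) :=
      Nat.mul_le_mul_right _ (by omega)
    omega
  have hTK : T + K ≤ 2 * T := by
    have : K * 4 ≤ K * L := Nat.mul_le_mul_left _ (by omega)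
    omega
  have hpts : L * K ≤ R * (S - L) := by
    have e1 : S - L = (201 * D - 1) * L := by rw [hS, Nat.sub_mul, one_mul]
    rw [e1]
    calc L * K = R * (200 * D * L) := by rw [hK, hDdef]; ring
      _ ≤ R * ((201 * D - 1) * L) :=
        Nat.mul_le_mul_left _ (Nat.mul_le_mul_right _ (by omega))
  have hbR : (b : ℝ) = q + 1 := by rw [hbq]; push_cast; ring
  have hqR : (1 : ℝ) ≤ q := by exact_mod_cast hq
  have hB : (2 * A + 1 : ℝ) ≤ ((b ^ (m + 2) : ℕ) : ℝ) := by exact_mod_cast hA2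
  have hA0 : (0 : ℝ) ≤ A := by positivity
  have hineq := interpolation_inequality hdeg P hP hP0 α g q n w K L R S T (2 * T) (b ^ (m + 2))
    (b ^ 2) hinj (by rintro rfl; simp at hα)
    (by
      rintro rfl
      have : (q : NumberField.RingOfIntegers F) ^ 2 = 0 := by linear_combination hg
      have := pow_eq_zero_iff (two_ne_zero) |>.1 this
      have : q = 0 := by exact_mod_cast this
      omega)
    (by omega) hw1 (Ideal.pow_le_pow_right hTV hcong) hwP hK1 (by omega) (hSR.trans hRn) hpts hTK
    (Nat.one_le_pow _ _ (by omega)) (by rw [hbq]; nlinarith)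
    (norm_le_of_quadratic α (2 * A) 1 _ (-2 * A) 1 (by simp [abs_mul]) (by simp) (by positivity)
      (by nlinarith) (by linarith) (by push_cast; linear_combination hα))
    (norm_le_of_quadratic g (2 * q) (q ^ 2) _ (2 * c) (q ^ 2)
      (by push_cast; rw [abs_of_nonneg (by positivity)]; gcongr) (by simp) (by positivity)
      (by push_cast; rw [hbR]; nlinarith [sq_nonneg ((q : ℝ) * (q + 1))])
      (by push_cast; rw [hbR]; nlinarith) (by push_cast; linear_combination hg))
  have hlt := upper_lt_lower b w m n lam S R K L (K * L) T (by omega) hw1 (by omega) hR1 hRn hup hR hK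
    hL rfl hKL
  omega

/-- In the setting of Problem 1 with `m ≥ 100`, `n < 2·10¹⁸ (log b)⁴`. -/
theorem n_bound_in_terms_of_b
    (b : ℕ) (hb : 2 ≤ b)
    (d : ℕ) (hd : 2 ≤ d) (hdns : ¬ IsSquare d)
    (X Y : ℕ → ℕ)
    (hX1 : 0 < X 1) (hY1 : 0 < Y 1)
    (hpell : (X 1 : ℤ) ^ 2 - (d : ℤ) * (Y 1 : ℤ) ^ 2 = 1)
    (hfund : ∀ x y : ℕ, 0 < x → 0 < y →
      (x : ℤ) ^ 2 - (d : ℤ) * (y : ℤ) ^ 2 = 1 → X 1 ≤ x)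
    (hXY : ∀ n : ℕ, 1 ≤ n →
      (X n : ℝ) + (Y n : ℝ) * Real.sqrt d =
        ((X 1 : ℝ) + (Y 1 : ℝ) * Real.sqrt d) ^ n)
    (a m : ℕ) (ha : 1 ≤ a ∧ a ≤ (b - 1) ^ 2) (hm : 100 ≤ m)
    (hrep1 : (b - 1) * X 1 = a * (b ^ m - 1))
    (n c ℓ : ℕ) (hn : 1 < n) (hnodd : Odd n)
    (hc : 1 ≤ c ∧ c ≤ b - 1) (hℓ : 1 ≤ ℓ)
    (hrepn : (b - 1) * X n = c * (b ^ (m * ℓ) - 1)) :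
    (n : ℝ) < 2 * 10 ^ 18 * (Real.log b) ^ 4 := by
  obtain ⟨x, h0, h1, hrec, hx⟩ := exists_pell_recurrence d hdns X Y hpell hXY
  obtain ⟨r, hr⟩ : b - 1 ∣ b ^ m - 1 := by simpa using Nat.sub_dvd_pow_sub_pow b 1 m
  have hbm : 1 ≤ b ^ m := Nat.one_le_pow _ _ (by omega)
  have hbml : 1 ≤ b ^ (m * ℓ) := Nat.one_le_pow _ _ (by omega)
  have hX : X 1 = a * r := by
    apply Nat.eq_of_mul_eq_mul_left (show 0 < b - 1 by omega)
    rw [hrep1, hr]; ring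
  have hlt : n < 2 ^ 58 := lt_two_pow_of_representation b (b - 1) a c m ℓ n r (X 1) x (by omega)
    (by omega) (by omega) hX ha.1 ha.2 hm h0 h1 hrec hn hnodd hc.1 hc.2 hℓ (by
      rw [hx n hn.le]
      have := congrArg (Nat.cast (R := ℤ)) hrepn
      push_cast [Nat.cast_sub hbml] at this
      exact_mod_cast this)
  have hlog2 : (0.69 : ℝ) < Real.log b := by
    have h2 : Real.log 2 ≤ Real.log b := Real.log_le_log (by norm_num) (by exact_mod_cast hb)
    have := Real.log_two_gt_d9
    linarith
  have hpow : (0.69 : ℝ) ^ 4 ≤ Real.log b ^ 4 := pow_le_pow_left₀ (by norm_num) hlog2.le 4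
  have hn' : (n : ℝ) < 2 ^ 58 := by exact_mod_cast hlt
  calc (n : ℝ) < 2 ^ 58 := hn'
    _ ≤ 2 * 10 ^ 18 * (0.69 : ℝ) ^ 4 := by norm_num
    _ ≤ 2 * 10 ^ 18 * Real.log b ^ 4 := by gcongr
end
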